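/- It is undecidable whether Attacker has a winning strategy in the Braid Game on the braid group B₅ starting from the trivial braid: the predicate on encoded instances (Attacker's finite list of braid words a₁, …, a_r and Defender's finite list of braid words d₁, …, d_s, all braid words being finite words over σ₁^{±1}, σ₂^{±1}, σ₃^{±1}, σ₄^{±1}, the initial braid being fixed as the identity of B₅) asserting that Attacker has a winning strategy is not a computable predicate. -/

import Mathlib

open FreeGroup in
/-- The Artin relators of the 5-strand braid group: `σ_i σ_j = σ_j σ_i` for `|i − j| ≥ 2`
and `σ_i σ_{i+1} σ_i = σ_{i+1} σ_i σ_{i+1}` for `1 ≤ i ≤ 3`. -/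
def braidRels5 : Set (FreeGroup (Fin 4)) :=
  {of 0 * of 2 * (of 2 * of 0)⁻¹,
   of 0 * of 3 * (of 3 * of 0)⁻¹,
   of 1 * of 3 * (of 3 * of 1)⁻¹,
   of 0 * of 1 * of 0 * (of 1 * of 0 * of 1)⁻¹,
   of 1 * of 2 * of 1 * (of 2 * of 1 * of 2)⁻¹,
   of 2 * of 3 * of 2 * (of 3 * of 2 * of 3)⁻¹}

/-- The 5-strand braid group `B₅`, presented with generators `σ₁, σ₂, σ₃, σ₄` and the
Artin relations. -/
abbrev B5 : Type := PresentedGroup braidRels5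

/-- A braid word over `σ₁^{±1}, …, σ₄^{±1}`: each letter is a generator index together with
a sign (`true` for the generator, `false` for its inverse). -/
abbrev BraidWord5 : Type := List (Fin 4 × Bool)

/-- The element of `B₅` represented by a braid word. -/
def braid5 (w : BraidWord5) : B5 :=
  (w.map fun p =>
    if p.2 then (PresentedGroup.of (rels := braidRels5) p.1)
    else (PresentedGroup.of (rels := braidRels5) p.1)⁻¹).prod

/-- An encoded instance of the Braid Game on `B₅` starting from the trivial braid:
Attacker's finite list of braid words and Defender's finite list of braid words. -/
abbrev BG5Instance : Type := List BraidWord5 × List BraidWord5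

/-- The configuration (a braid in `B₅`) after `k` rounds of the Braid Game, starting from
`c0`, when Defender plays the sequence of braids `δ` and Attacker follows the strategy `st`
(a function of the finite history of Defender's choices so far); moves act by right
composition, Defender first. -/
def bg5Pos (c0 : B5) (δ : ℕ → B5) (st : List B5 → B5) : ℕ → B5
  | 0 => c0
  | k + 1 => bg5Pos c0 δ st k * δ k * st ((List.range (k + 1)).map δ)

/-- Attacker has a winning strategy in the Braid Game on `B₅` with Attacker's braid list
`A`, Defender's braid list `D` and initial braid `c0`: there is a strategy, choosing a
braid from `A` for every finite history of Defender's choices, such that every infinite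
play consistent with it reaches the trivial braid after some Attacker move. -/
def BG5AttackerWins (A D : List B5) (c0 : B5) : Prop :=
  ∃ st : List B5 → B5,
    (∀ hist, (∀ x ∈ hist, x ∈ D) → st hist ∈ A) ∧
    ∀ δ : ℕ → B5, (∀ i, δ i ∈ D) → ∃ n, bg5Pos c0 δ st (n + 1) = 1


/-! ### Part 1: group theory -/

namespace BG

/-- The `i`-th standard generator of `B₅`. -/
def sg (i : Fin 4) : B5 := PresentedGroup.of (rels := braidRels5) i

/-- elementary shears of `ℤ⁴` -/
def tPerm : Fin 4 → Equiv.Perm (ℤ × ℤ × ℤ × ℤ)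
  | 0 => ⟨fun v => (v.1 - v.2.1, v.2.1, v.2.2.1, v.2.2.2),
          fun v => (v.1 + v.2.1, v.2.1, v.2.2.1, v.2.2.2),
          fun v => by simp, fun v => by simp⟩
  | 1 => ⟨fun v => (v.1, v.2.1 + v.1 - v.2.2.1, v.2.2.1, v.2.2.2),
          fun v => (v.1, v.2.1 - v.1 + v.2.2.1, v.2.2.1, v.2.2.2),
          fun v => by ext <;> simp <;> ring, fun v => by ext <;> simp <;> ring⟩
  | 2 => ⟨fun v => (v.1, v.2.1, v.2.2.1 + v.2.1 - v.2.2.2, v.2.2.2),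
          fun v => (v.1, v.2.1, v.2.2.1 - v.2.1 + v.2.2.2, v.2.2.2),
          fun v => by ext <;> simp <;> ring, fun v => by ext <;> simp <;> ring⟩
  | 3 => ⟨fun v => (v.1, v.2.1, v.2.2.1, v.2.2.2 + v.2.2.1),
          fun v => (v.1, v.2.1, v.2.2.1, v.2.2.2 - v.2.2.1),
          fun v => by simp, fun v => by simp⟩

theorem tPerm_rels : ∀ r ∈ braidRels5, FreeGroup.lift tPerm r = 1 := by
  intro r hr
  simp only [braidRels5, Set.mem_insert_iff, Set.mem_singleton_iff] at hr
  rcases hr with rfl | rfl | rfl | rfl | rfl | rfl <;>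
  · simp only [map_mul, map_inv, FreeGroup.lift_apply_of]
    rw [mul_inv_eq_one]
    ext v <;> simp [tPerm, Equiv.Perm.mul_apply] <;> ring

def rho : B5 →* Equiv.Perm (ℤ × ℤ × ℤ × ℤ) := PresentedGroup.toGroup tPerm_rels

theorem ab_rels : ∀ r ∈ braidRels5,
    FreeGroup.lift (fun _ : Fin 4 => Multiplicative.ofAdd (1 : ℤ)) r = 1 := by
  intro r hr
  simp only [braidRels5, Set.mem_insert_iff, Set.mem_singleton_iff] at hr
  rcases hr with rfl | rfl | rfl | rfl | rfl | rfl <;>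
  · simp only [map_mul, map_inv, FreeGroup.lift_apply_of]
    simp

def abz : B5 →* Multiplicative ℤ := PresentedGroup.toGroup ab_rels

@[simp] theorem rho_sg (i : Fin 4) : rho (sg i) = tPerm i := by
  simp [rho, sg, PresentedGroup.toGroup.of]

@[simp] theorem abz_sg (i : Fin 4) : abz (sg i) = Multiplicative.ofAdd (1 : ℤ) := by
  simp [abz, sg, PresentedGroup.toGroup.of]

theorem rel_comm (i j : Fin 4)
    (h : FreeGroup.of i * FreeGroup.of j * (FreeGroup.of j * FreeGroup.of i)⁻¹ ∈ braidRels5) :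
    Commute (sg i) (sg j) := by
  have := PresentedGroup.one_of_mem h
  rw [map_mul, map_inv, mul_inv_eq_one] at this
  simpa [Commute, SemiconjBy, sg, PresentedGroup.of] using this

theorem comm03 : Commute (sg 0) (sg 3) := rel_comm 0 3 (by simp [braidRels5])

theorem comm13 : Commute (sg 1) (sg 3) := rel_comm 1 3 (by simp [braidRels5])

/-- signed letters -/
abbrev SL : Type := ℕ × Bool

/-- the braid of a signed letter -/
def gB (y : SL) : B5 :=
  (sg 0 ^ (4 * y.1))⁻¹ * (if y.2 then (sg 1 ^ 4)⁻¹ else sg 1 ^ 4) * sg 0 ^ (4 * y.1)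

theorem gB_neg (i : ℕ) (b : Bool) : gB (i, b) * gB (i, !b) = 1 := by
  cases b <;> simp [gB] <;> group

theorem gB_inv (i : ℕ) (b : Bool) : (gB (i, b))⁻¹ = gB (i, !b) :=
  inv_eq_of_mul_eq_one_right (gB_neg i b)

theorem gB_comm (y : SL) : Commute (gB y) (sg 3) := by
  unfold gB
  refine Commute.mul_left (Commute.mul_left ?_ ?_) ?_
  · exact (comm03.pow_left _).inv_left
  · split_ifs
    · exact (comm13.pow_left _).inv_left
    · exact comm13.pow_left _
  · exact comm03.pow_left _

/-- braid of a list of signed letters -/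
def val : List SL → B5
  | [] => 1
  | y :: l => gB y * val l

theorem val_comm (l : List SL) : Commute (val l) (sg 3) := by
  induction l with
  | nil => exact Commute.one_left _
  | cons y l ih => exact (gB_comm y).mul_left ih

/-- freely reduced left multiplication by a letter -/
def act (y : SL) : List SL → List SL
  | [] => [y]
  | x :: l => if x = (y.1, !y.2) then l else y :: x :: l

theorem val_act (y : SL) (l : List SL) : val (act y l) = gB y * val l := by
  cases l with
  | nil => rfl
  | cons x l =>
    simp only [act]
    split_ifs with h
    · subst h
      simp only [val, ← mul_assoc]
      rw [gB_neg, one_mul]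
    · rfl

/-- freely reduced lists -/
def Rd : List SL → Prop
  | [] => True
  | [_] => True
  | x :: y :: l => y ≠ (x.1, !x.2) ∧ Rd (y :: l)

theorem Rd.tail {x : SL} {l : List SL} (h : Rd (x :: l)) : Rd l := by
  cases l with
  | nil => trivial
  | cons y l => exact h.2

theorem Rd.act {l : List SL} (h : Rd l) (y : SL) : Rd (act y l) := by
  cases l with
  | nil => trivial
  | cons x l =>
    simp only [BG.act]
    split_ifs with hx
    · exact h.tail
    · exact ⟨hx, h⟩

/-- action of a letter on the plane -/
def pl (y : SL) (v : ℤ × ℤ) : ℤ × ℤ :=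
  let u := v.1 - 4 * y.1 * v.2
  let y' := if y.2 then v.2 - 4 * u else v.2 + 4 * u
  (u + 4 * y.1 * y', y')

theorem t0_pow (n : ℕ) (x y : ℤ) : (tPerm 0 ^ n) (x, y, 0, 0) = (x - n * y, y, 0, 0) := by
  induction n generalizing x with
  | zero => simp
  | succ n ih =>
    rw [pow_succ, Equiv.Perm.mul_apply]
    simp only [tPerm, Equiv.coe_fn_mk] at ih ⊢
    rw [ih]; ext <;> simp; ring

theorem t1_pow (n : ℕ) (x y : ℤ) : (tPerm 1 ^ n) (x, y, 0, 0) = (x, y + n * x, 0, 0) := by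
  induction n generalizing y with
  | zero => simp
  | succ n ih =>
    rw [pow_succ, Equiv.Perm.mul_apply]
    simp only [tPerm, Equiv.coe_fn_mk] at ih ⊢
    have := ih (y + x - 0)
    rw [this]; ext <;> simp; ring

theorem rho_gB (y : SL) (v : ℤ × ℤ) :
    rho (gB y) (v.1, v.2, 0, 0) = ((pl y v).1, (pl y v).2, 0, 0) := by
  obtain ⟨i, b⟩ := y
  obtain ⟨p, q⟩ := v
  cases b
  · simp only [gB, map_mul, map_inv, map_pow, rho_sg, Equiv.Perm.mul_apply, t0_pow, pl,
      Bool.false_eq_true, if_false]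
    rw [t1_pow, Equiv.Perm.inv_eq_iff_eq, t0_pow]
    ext <;> simp
  · simp only [gB, map_mul, map_inv, map_pow, rho_sg, Equiv.Perm.mul_apply, t0_pow, pl,
      if_true]
    rw [Equiv.Perm.inv_eq_iff_eq, t0_pow, Equiv.Perm.inv_eq_iff_eq, t1_pow]
    ext <;> simp

/-- image of the base vector -/
def vec : List SL → ℤ × ℤ
  | [] => (1, 0)
  | y :: l => pl y (vec l)

theorem rho_val (l : List SL) : rho (val l) (1, 0, 0, 0) = ((vec l).1, (vec l).2, 0, 0) := by
  induction l with
  | nil => simp [val, vec]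
  | cons y l ih =>
    simp only [val, map_mul, Equiv.Perm.mul_apply, ih, vec]
    exact rho_gB y (vec l)

theorem rho_s3 (k : ℤ) : rho (sg 3 ^ k) (1, 0, 0, 0) = (1, 0, 0, 0) := by
  rw [map_zpow, rho_sg]
  have h : (tPerm 3) (1, 0, 0, 0) = (1, 0, 0, 0) := by simp [tPerm]
  exact Equiv.Perm.zpow_apply_eq_self_of_apply_eq_self h k

/-- ping-pong domains -/
def dom (y : SL) (v : ℤ × ℤ) : Prop :=
  |v.1 - 4 * y.1 * v.2| < |v.2| ∧
    (if y.2 then (v.1 - 4 * y.1 * v.2) * v.2 < 0 else 0 < (v.1 - 4 * y.1 * v.2) * v.2)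

theorem dom_outer (y : SL) (v : ℤ × ℤ) (h0 : v.1 - 4 * y.1 * v.2 ≠ 0)
    (h1 : |v.2| ≤ |v.1 - 4 * y.1 * v.2|) : dom y (pl y v) := by
  obtain ⟨i, b⟩ := y
  obtain ⟨p, q⟩ := v
  simp only [dom, pl] at *
  generalize p - 4 * (i : ℤ) * q = u at *
  have hu : 0 < |u| := abs_pos.mpr h0
  have hqu : |q * u| ≤ u * u := by
    rw [abs_mul, ← abs_mul_abs_self u]; nlinarith
  have h2 := abs_le.mp hqu
  have hpos : 0 < u * u := mul_self_pos.mpr h0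
  cases b
  · simp only [Bool.false_eq_true, if_false, add_sub_cancel_right]
    constructor
    · have := abs_add_le (q + 4 * u) (-q)
      rw [abs_neg, show q + 4 * u + -q = 4 * u by ring, abs_mul] at this
      norm_num at this
      linarith
    · nlinarith
  · simp only [if_true, add_sub_cancel_right]
    constructor
    · have := abs_add_le (q - 4 * u) (-q)
      rw [abs_neg, show q - 4 * u + -q = -(4 * u) by ring, abs_neg, abs_mul] at this
      norm_num at this
      linarith
    · nlinarith

theorem dom_inner (y : SL) (v : ℤ × ℤ) (h : dom y v) : dom y (pl y v) := by
  obtain ⟨i, b⟩ := y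
  obtain ⟨p, q⟩ := v
  simp only [dom, pl] at *
  generalize p - 4 * (i : ℤ) * q = u at *
  obtain ⟨h1, h2⟩ := h
  cases b
  · simp only [Bool.false_eq_true, if_false, add_sub_cancel_right] at *
    constructor
    · refine lt_of_lt_of_le h1 ?_
      apply sq_le_sq.mp
      nlinarith [sq_nonneg u]
    · nlinarith [sq_nonneg u]
  · simp only [if_true, add_sub_cancel_right] at *
    constructor
    · refine lt_of_lt_of_le h1 ?_
      apply sq_le_sq.mp
      nlinarith [sq_nonneg u]
    · nlinarith [sq_nonneg u]

theorem dom_other (i j : ℕ) (b : Bool) (v : ℤ × ℤ) (hij : i ≠ j) (h : dom (j, b) v) :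
    v.1 - 4 * (i : ℤ) * v.2 ≠ 0 ∧ |v.2| ≤ |v.1 - 4 * (i : ℤ) * v.2| := by
  obtain ⟨p, q⟩ := v
  have h1 := h.1
  simp only at h1 ⊢
  have hq : 0 < |q| := lt_of_le_of_lt (abs_nonneg _) h1
  have hd : 1 ≤ |(i : ℤ) - j| := by
    apply Int.one_le_abs; omega
  have h3 : |4 * ((i : ℤ) - j) * q| = 4 * |(i : ℤ) - j| * |q| := by
    rw [abs_mul, abs_mul]; norm_num
  have h4 : 4 * |q| ≤ |4 * ((i : ℤ) - j) * q| := by rw [h3]; nlinarith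
  have h5 := abs_sub (p - 4 * (j : ℤ) * q) (p - 4 * (i : ℤ) * q)
  rw [show p - 4 * (j : ℤ) * q - (p - 4 * (i : ℤ) * q) = 4 * ((i : ℤ) - j) * q by ring] at h5
  have h6 : |q| < |p - 4 * (i : ℤ) * q| := by linarith
  exact ⟨abs_pos.mp (by linarith), h6.le⟩

theorem dom_vec (y : SL) (l : List SL) (h : Rd (y :: l)) : dom y (vec (y :: l)) := by
  induction l generalizing y with
  | nil =>
    apply dom_outer <;> simp [vec]
  | cons x l ih =>
    have hx := ih x h.2
    show dom y (pl y (vec (x :: l)))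
    obtain ⟨i, b⟩ := y
    obtain ⟨j, c⟩ := x
    by_cases hij : i = j
    · subst hij
      have hbc : c = b := by
        have := h.1
        cases b <;> cases c <;> simp_all
      subst hbc
      exact dom_inner _ _ hx
    · obtain ⟨h0, h1⟩ := dom_other i j c _ hij hx
      exact dom_outer _ _ h0 h1

/-- the configuration encoded by a stack and a counter -/
def cfg (l : List SL) (k : ℤ) : B5 := (val l * sg 3 ^ k)⁻¹

theorem cfg_nil_zero : cfg [] 0 = 1 := by simp [cfg, val]

theorem cfg_ne_one {l : List SL} {k : ℤ} (hr : Rd l) (h : l ≠ [] ∨ k ≠ 0) : cfg l k ≠ 1 := by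
  intro h1
  rw [cfg, inv_eq_one] at h1
  cases l with
  | nil =>
    have hk : k ≠ 0 := by simpa using h
    apply hk
    have := congrArg abz h1
    simp only [val, one_mul, map_zpow, abz_sg, map_one] at this
    have := congrArg Multiplicative.toAdd this
    simpa using this
  | cons y l =>
    have h2 := congrArg (fun g => rho g (1, 0, 0, 0)) h1
    simp only [map_mul, Equiv.Perm.mul_apply, rho_s3, map_one, Equiv.Perm.one_apply] at h2
    rw [rho_val] at h2
    have hd := (dom_vec y l hr).1
    have hy : (vec (y :: l)).2 = 0 := by
      have := congrArg (fun t => t.2.1) h2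
      simpa using this
    rw [hy] at hd
    simp only [abs_zero] at hd
    exact absurd hd (not_lt.mpr (abs_nonneg _))

/-- a move: letters to multiply (successively), and a counter increment -/
abbrev Move : Type := List SL × ℤ

/-- effect on stacks -/
def acts (ys : List SL) (l : List SL) : List SL := ys.foldl (fun l y => act y l) l

@[simp] theorem acts_nil (l : List SL) : acts [] l = l := rfl

@[simp] theorem acts_cons (y : SL) (ys l : List SL) : acts (y :: ys) l = acts ys (act y l) := rfl

theorem Rd.acts {l : List SL} (h : Rd l) (ys : List SL) : Rd (acts ys l) := by
  induction ys generalizing l with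
  | nil => exact h
  | cons y ys ih => exact ih (h.act y)

/-- words -/
def gW (y : SL) : BraidWord5 :=
  List.replicate (4 * y.1) (0, false) ++ List.replicate 4 (1, !y.2) ++
    List.replicate (4 * y.1) (0, true)

theorem braid5_append (u v : BraidWord5) : braid5 (u ++ v) = braid5 u * braid5 v := by
  simp [braid5]

theorem braid5_rep (n : ℕ) (i : Fin 4) (b : Bool) :
    braid5 (List.replicate n (i, b)) = if b then sg i ^ n else (sg i ^ n)⁻¹ := by
  cases b <;> simp [braid5, sg]

theorem braid5_gW (y : SL) : braid5 (gW y) = gB y := by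
  obtain ⟨i, b⟩ := y
  cases b <;> simp only [gW, braid5_append, braid5_rep, gB] <;> simp

/-- word of a power of the fourth generator -/
def pW (k : ℤ) : BraidWord5 :=
  if 0 ≤ k then List.replicate k.toNat (3, true) else List.replicate (-k).toNat (3, false)

theorem braid5_pW (k : ℤ) : braid5 (pW k) = sg 3 ^ k := by
  unfold pW
  split_ifs with h
  · rw [braid5_rep, if_pos rfl, ← zpow_natCast, Int.toNat_of_nonneg h]
  · rw [braid5_rep, if_neg (by simp), ← zpow_natCast, Int.toNat_of_nonneg (by omega),
      zpow_neg, inv_inv]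

/-- word of the letters of a move -/
def yW (ys : List SL) : BraidWord5 := ys.flatMap (fun y => gW (y.1, !y.2))

/-- the braid played by a move -/
def mB (m : Move) : B5 := braid5 (yW m.1) * sg 3 ^ (-m.2)

theorem cfg_yW (l : List SL) (k : ℤ) (ys : List SL) :
    cfg l k * braid5 (yW ys) = cfg (acts ys l) k := by
  induction ys generalizing l with
  | nil => simp [yW, braid5]
  | cons y ys ih =>
    have : yW (y :: ys) = gW (y.1, !y.2) ++ yW ys := rfl
    rw [this, braid5_append, ← mul_assoc, acts_cons, ← ih, braid5_gW, ← gB_inv]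
    congr 1
    unfold cfg
    rw [val_act]
    simp only [mul_inv_rev]
    group

theorem cfg_mB (l : List SL) (k : ℤ) (m : Move) :
    cfg l k * mB m = cfg (acts m.1 l) (k + m.2) := by
  rw [mB, ← mul_assoc, cfg_yW]
  unfold cfg
  rw [zpow_add, ← mul_assoc, mul_inv_rev (_ * _), ← zpow_neg]
  have h : Commute (val (acts m.1 l) * sg 3 ^ k)⁻¹ (sg 3 ^ (-m.2)) := by
    refine (Commute.mul_left ?_ ?_).inv_left
    · exact (val_comm _).zpow_right _
    · exact (Commute.refl (sg 3)).zpow_zpow _ _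
  exact h.eq

end BG

/-! ### Generic game lemmas -/

namespace BG

/-- positions from which Attacker wins after finitely many rounds -/
inductive Win (A D : List B5) : B5 → Prop
  | mk (P : B5) (f : B5 → B5) (hf : ∀ d ∈ D, f d ∈ A)
      (h : ∀ d ∈ D, P * d * f d ≠ 1 → Win A D (P * d * f d)) : Win A D P

theorem Win.intro' {A D : List B5} {P : B5}
    (h : ∀ d ∈ D, ∃ a ∈ A, P * d * a = 1 ∨ Win A D (P * d * a)) : Win A D P := by
  classical
  choose! f hf hw using h
  exact Win.mk P f hf fun d hd h1 => (hw d hd).resolve_left h1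

theorem attacker_of_win {A D : List B5} {c0 : B5} (hA : A ≠ []) (hw : Win A D c0) :
    BG5AttackerWins A D c0 := by
  classical
  obtain ⟨a0, ha0⟩ := List.exists_mem_of_ne_nil A hA
  induction hw with
  | mk P f hf h ih =>
    choose! S hS hS' using ih
    let st : List B5 → B5 := fun hist => match hist with
      | [] => a0
      | d :: [] => f d
      | d :: e :: hh => if P * d * f d = 1 then a0 else S d (e :: hh)
    refine ⟨st, ?_, fun δ hδ => ?_⟩
    · intro hist hh
      match hist, hh with
      | [], _ => exact ha0
      | [d], hh => exact hf d (hh d (by simp))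
      | d :: e :: l, hh =>
        simp only [st]
        split_ifs with h1
        · exact ha0
        · exact hS d (hh d (by simp)) h1 _ fun x hx => hh x (List.mem_cons_of_mem _ hx)
    · by_cases h1 : P * δ 0 * f (δ 0) = 1
      · exact ⟨0, by simpa [bg5Pos, st] using h1⟩
      · obtain ⟨n, hn⟩ := hS' (δ 0) (hδ 0) h1 (fun i => δ (i + 1)) (fun i => hδ _)
        have key : ∀ n, bg5Pos P δ st (n + 1) =
            bg5Pos (P * δ 0 * f (δ 0)) (fun i => δ (i + 1)) (S (δ 0)) n := by
          intro n
          induction n with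
          | zero => simp [bg5Pos, st]
          | succ n ihn =>
            rw [bg5Pos, ihn, bg5Pos]
            congr 1
            have e : (List.range (n + 1 + 1)).map δ =
                δ 0 :: (List.range (n + 1)).map (fun i => δ (i + 1)) := by
              rw [List.range_succ_eq_map]; simp [Function.comp_def]
            have e' : (List.range (n + 1)).map (fun i => δ (i + 1)) =
                δ 1 :: (List.range n).map (fun i => δ (i + 2)) := by
              rw [List.range_succ_eq_map]; simp [Function.comp_def]
            rw [e, e']
            simp only [st]
            rw [if_neg h1]
        exact ⟨n + 1, by rw [key]; exact hn⟩

theorem not_attacker {A D : List B5} {c0 : B5} (Inv : B5 → Prop) (h0 : Inv c0)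
    (h : ∀ P, Inv P → ∃ d ∈ D, ∀ a ∈ A, P * d * a ≠ 1 ∧ Inv (P * d * a)) :
    ¬ BG5AttackerWins A D c0 := by
  classical
  rintro ⟨st, hst, hw⟩
  choose! f hfD hf using h
  let H : ℕ → List B5 × B5 := fun n => Nat.rec ([], c0)
    (fun _ s => (s.1 ++ [f s.2], s.2 * f s.2 * st (s.1 ++ [f s.2]))) n
  let δ : ℕ → B5 := fun n => f (H n).2
  have hH : ∀ n, (H n).1 = (List.range n).map δ ∧ (H n).2 = bg5Pos c0 δ st n := by
    intro n
    induction n with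
    | zero => exact ⟨rfl, rfl⟩
    | succ n ih =>
      have e1 : (H (n + 1)).1 = (H n).1 ++ [δ n] := rfl
      have e2 : (H (n + 1)).2 = (H n).2 * δ n * st ((H n).1 ++ [δ n]) := rfl
      have e3 : (List.range (n + 1)).map δ = (H n).1 ++ [δ n] := by
        rw [ih.1, List.range_succ]; simp
      refine ⟨e1.trans e3.symm, ?_⟩
      rw [e2, bg5Pos, e3, ih.2]
  have hI : ∀ n, Inv (H n).2 ∧ ∀ x ∈ (H n).1, x ∈ D := by
    intro n
    induction n with
    | zero => exact ⟨h0, by simp [H]⟩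
    | succ n ih =>
      have hm : ∀ x ∈ (H n).1 ++ [f (H n).2], x ∈ D := by
        intro x hx
        rcases List.mem_append.1 hx with hx | hx
        · exact ih.2 x hx
        · rw [List.mem_singleton.1 hx]; exact hfD _ ih.1
      exact ⟨(hf _ ih.1 _ (hst _ hm)).2, hm⟩
  obtain ⟨n, hn⟩ := hw δ (fun i => hfD _ (hI i).1)
  rw [← (hH (n + 1)).2] at hn
  refine (hf _ (hI n).1 _ (hst ((H n).1 ++ [f (H n).2]) ?_)).1 hn
  exact (hI (n + 1)).2

end BG

/-! ### The linear word game -/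

namespace BG

/-- stack letters -/
inductive Let (E : Type) : Type
  | s | z
  | e (x : E)
  | M (q : Option (E × Fin 3))

open Let

section Word

variable {E : Type} (ι : Let E → ℕ) (wt : E → Fin 3 → E → ℤ) (fin : E → Fin 3 → ℤ)

/-- letters of Defender -/
def Df : Let E → Prop
  | M _ => False
  | _ => True

/-- the two auxiliary letters -/
def Aux : Let E → Prop
  | s => True
  | z => True
  | _ => False

/-- weight in a mode -/
def wtq : Option (E × Fin 3) → E → ℤ
  | none, _ => 0
  | some p, x => wt p.1 p.2 x

/-- final weight of a mode -/
def finq : Option (E × Fin 3) → ℤ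
  | none => 0
  | some p => fin p.1 p.2

/-- push -/
def ps (x : Let E) : SL := (ι x, true)
/-- pop -/
def pp (x : Let E) : SL := (ι x, false)

/-- moves of Attacker -/
inductive IsMove : Move → Prop
  | pass : IsMove ([], 0)
  | start (x : E) (c : Fin 3) : IsMove ([pp ι (e x), ps ι (M (some (x, c)))], 0)
  | start1 (y : Let E) (hy : Aux y) (x : E) :
      IsMove ([pp ι y, pp ι (e x), ps ι (M none)], 0)
  | start2 (y : Let E) (hy : Aux y) : IsMove ([pp ι y, pp ι s], 0)
  | count (y : Let E) (hy : Df y) (q : Option (E × Fin 3)) (x : E) :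
      IsMove ([pp ι y, pp ι (M q), pp ι (e x), ps ι (M q)], wtq wt q x)
  | final (y : Let E) (hy : Df y) (q : Option (E × Fin 3)) :
      IsMove ([pp ι y, pp ι (M q), pp ι s], finq fin q)
  | sub (y : Let E) (hy : Df y) : IsMove ([pp ι y], -1)
  | first (y : Let E) (hy : Df y) (hs : y ≠ s) : IsMove ([pp ι y], 0)

/-- good infinite words -/
def Good (w : ℕ → E) : Prop :=
  ∀ N c, fin (w N) c + ∑ i ∈ Finset.range N, wt (w N) c (w i) < 0

/-- dead letters -/
def DeadL (y : SL) : Prop := (∃ x, Df x ∧ y = pp ι x) ∨ y = ps ι z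

/-- tame actions -/
def Tame (y : SL) : Prop :=
  (∃ q, y = ps ι (M q)) ∨ (∃ q, y = pp ι (M q)) ∨ (∃ x, y = pp ι (e x)) ∨ y = pp ι s

/-- stacks with a dead letter -/
def HasDead (l : List SL) : Prop := ∃ y ∈ l, DeadL ι y

/-- the stack of a word -/
def Wd (w : ℕ → E) : ℕ → List SL
  | 0 => [ps ι s]
  | j + 1 => ps ι (e (w j)) :: Wd w j

variable {ι}

theorem act_pp_ps (x : Let E) (l : List SL) : act (pp ι x) (ps ι x :: l) = l := by
  simp [act, pp, ps]

theorem act_pp_ne (hι : Function.Injective ι) {x y : Let E} (h : x ≠ y) (l : List SL) :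
    act (pp ι x) (ps ι y :: l) = pp ι x :: ps ι y :: l := by
  simp only [act, pp, ps, Bool.not_false, Prod.mk.injEq, and_true]
  rw [if_neg fun h' => h (hι h'.symm)]

theorem act_ps_ps (x y : Let E) (l : List SL) :
    act (ps ι x) (ps ι y :: l) = ps ι x :: ps ι y :: l := by
  simp [act, ps]

theorem HasDead.act (hι : Function.Injective ι) {l : List SL} (h : HasDead ι l) {y : SL}
    (hy : Tame ι y) : HasDead ι (act y l) := by
  obtain ⟨x, hx, hd⟩ := h
  cases l with
  | nil => simp at hx
  | cons a l =>
    simp only [BG.act]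
    split_ifs with ha
    · rcases List.mem_cons.1 hx with rfl | hx
      · exfalso
        rcases hy with ⟨q, rfl⟩ | ⟨q, rfl⟩ | ⟨q, rfl⟩ | rfl <;>
        rcases hd with ⟨u, hu, rfl⟩ | rfl <;>
        simp only [pp, ps, Prod.mk.injEq, Bool.not_true, Bool.not_false, and_true, and_false,
          reduceCtorEq] at ha
        · have := hι ha
          subst this
          exact hu
        all_goals exact absurd (hι ha) (by simp)
      · exact ⟨x, hx, hd⟩
    · exact ⟨x, List.mem_cons_of_mem _ hx, hd⟩

theorem HasDead.acts (hι : Function.Injective ι) {ys l : List SL} (h : HasDead ι l)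
    (hy : ∀ y ∈ ys, Tame ι y) : HasDead ι (acts ys l) := by
  induction ys generalizing l with
  | nil => exact h
  | cons y ys ih =>
    exact ih (h.act hι (hy y (by simp))) fun x hx => hy x (List.mem_cons_of_mem _ hx)

theorem dead_new {x : Let E} (hx : Df x) {l : List SL} (h : l.head? ≠ some (ps ι x)) :
    HasDead ι (act (pp ι x) l) := by
  have h0 : act (pp ι x) l = pp ι x :: l := by
    cases l with
    | nil => rfl
    | cons a l =>
      simp only [act]
      rw [if_neg]
      intro h'
      apply h
      simp [h', pp, ps]
  rw [h0]
  exact ⟨_, by simp, Or.inl ⟨x, hx, rfl⟩⟩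

theorem dead_acts (hι : Function.Injective ι) {x : Let E} (hx : Df x) {ys l : List SL}
    (h : l.head? ≠ some (ps ι x)) (hy : ∀ y ∈ ys, Tame ι y) :
    HasDead ι (acts (pp ι x :: ys) l) := by
  rw [acts_cons]
  exact (dead_new hx h).acts hι hy

theorem HasDead.ne_nil {l : List SL} (h : HasDead ι l) : l ≠ [] := by
  rintro rfl
  obtain ⟨x, hx, _⟩ := h
  simp at hx

variable (ι)

set_option linter.unusedSimpArgs false in
theorem move_shape {m : Move} (h : IsMove ι wt fin m) :
    m = ([], 0) ∨ ∃ y ys, Df y ∧ m.1 = pp ι y :: ys ∧ ∀ x ∈ ys, Tame ι x := by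
  have t1 : ∀ q, Tame ι (ps ι (M q)) := fun q => Or.inl ⟨q, rfl⟩
  have t2 : ∀ q, Tame ι (pp ι (M q)) := fun q => Or.inr (Or.inl ⟨q, rfl⟩)
  have t3 : ∀ q, Tame ι (pp ι (e q)) := fun q => Or.inr (Or.inr (Or.inl ⟨q, rfl⟩))
  have t4 : Tame ι (pp ι s) := Or.inr (Or.inr (Or.inr rfl))
  have hAux : ∀ y : Let E, Aux y → Df y := by
    intro y hy
    cases y <;> simp_all [Aux, Df]
  cases h with
  | pass => exact Or.inl rfl
  | start x c => exact Or.inr ⟨e x, _, trivial, rfl, by simp [t1, t2, t3, t4]⟩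
  | start1 y hy x => exact Or.inr ⟨y, _, hAux y hy, rfl, by simp [t1, t2, t3, t4]⟩
  | start2 y hy => exact Or.inr ⟨y, _, hAux y hy, rfl, by simp [t1, t2, t3, t4]⟩
  | count y hy q x => exact Or.inr ⟨y, _, hy, rfl, by simp [t1, t2, t3, t4]⟩
  | final y hy q => exact Or.inr ⟨y, _, hy, rfl, by simp [t1, t2, t3, t4]⟩
  | sub y hy => exact Or.inr ⟨y, _, hy, rfl, by simp⟩
  | first y hy hs => exact Or.inr ⟨y, _, hy, rfl, by simp⟩

/-- safe stacks for Defender -/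
inductive Safe (w : ℕ → E) : List SL → ℤ → Prop
  | empty (k : ℤ) (hk : k ≤ 0) : Safe w [] k
  | word (j : ℕ) (k : ℤ) (hk : k ≤ 0) : Safe w (Wd ι w j) k
  | mode (q : Option (E × Fin 3)) (j : ℕ) (k : ℤ)
      (hk : k + finq fin q + ∑ i ∈ Finset.range j, wtq wt q (w i) < 0) :
      Safe w (ps ι (M q) :: Wd ι w j) k
  | dead (l : List SL) (k : ℤ) (h : HasDead ι l) : Safe w l k

/-- the result of a move is fine for Defender -/
def Fine (w : ℕ → E) (l : List SL) (k : ℤ) : Prop :=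
  (l ≠ [] ∨ k ≠ 0) ∧ Safe ι wt fin w l k

theorem Fine.dead {w : ℕ → E} {l : List SL} {k : ℤ} (h : HasDead ι l) : Fine ι wt fin w l k :=
  ⟨Or.inl h.ne_nil, Safe.dead l k h⟩

theorem Wd_ne (w : ℕ → E) (j : ℕ) : Wd ι w j ≠ [] := by cases j <;> simp [Wd]

theorem Fine.word {w : ℕ → E} (j : ℕ) {k : ℤ} (h : k ≤ 0) : Fine ι wt fin w (Wd ι w j) k :=
  ⟨Or.inl (Wd_ne ι w j), Safe.word j k h⟩

theorem Wd_head (w : ℕ → E) (j : ℕ) : ∃ x l, Df x ∧ x ≠ z ∧ Wd ι w j = ps ι x :: l := by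
  cases j with
  | zero => exact ⟨s, [], trivial, by simp, rfl⟩
  | succ j => exact ⟨e (w j), _, trivial, by simp, rfl⟩

theorem safe_step (hι : Function.Injective ι) (w : ℕ → E) (hw : Good wt fin w)
    {l : List SL} {k : ℤ} (h : Safe ι wt fin w l k) :
    ∃ x : Let E, Df x ∧ ∀ m, IsMove ι wt fin m →
      Fine ι wt fin w (acts m.1 (act (ps ι x) l)) (k + m.2) := by
  have hps : ∀ {x y : Let E}, ps ι x = ps ι y → x = y := fun h => hι (congrArg Prod.fst h)
  -- a mismatching pop is harmless
  have key : ∀ (x : Let E) (l : List SL) (k : ℤ) (y : Let E) (ys : List SL), Df y →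
      (∀ x ∈ ys, Tame ι x) → y ≠ x → Fine ι wt fin w (acts (pp ι y :: ys) (ps ι x :: l)) k := by
    intro x l k y ys hy hys hne
    refine Fine.dead ι wt fin (dead_acts hι hy ?_ hys)
    simp only [List.head?_cons, ne_eq, Option.some.injEq]
    exact fun h => hne (hps h).symm
  have hAux : ∀ y : Let E, Aux y → Df y := by
    intro y hy
    cases y <;> simp_all [Aux, Df]
  have t1 : ∀ q, Tame ι (ps ι (M q)) := fun q => Or.inl ⟨q, rfl⟩
  have t2 : ∀ q, Tame ι (pp ι (M q)) := fun q => Or.inr (Or.inl ⟨q, rfl⟩)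
  have t3 : ∀ q, Tame ι (pp ι (e q)) := fun q => Or.inr (Or.inr (Or.inl ⟨q, rfl⟩))
  have t4 : Tame ι (pp ι s) := Or.inr (Or.inr (Or.inr rfl))
  -- popping a mode letter and then a defender letter from a stack without mode on top
  have key2 : ∀ (l : List SL) (k : ℤ) (q : Option (E × Fin 3)) (y : Let E) (ys : List SL), Df y →
      (∀ x ∈ ys, Tame ι x) → l.head? ≠ some (ps ι (M q)) →
      Fine ι wt fin w (acts (pp ι (M q) :: pp ι y :: ys) l) k := by
    intro l k q y ys hy hys hne
    have h0 : act (pp ι (M q)) l = pp ι (M q) :: l := by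
      cases l with
      | nil => rfl
      | cons a l =>
        simp only [act]
        rw [if_neg]
        intro h'
        apply hne
        simp [h', pp, ps]
    rw [acts_cons, h0]
    refine Fine.dead ι wt fin (dead_acts hι hy ?_ hys)
    simp [pp, ps]
  cases h with
  | empty k hk =>
    refine ⟨s, trivial, fun m hm => ?_⟩
    show Fine ι wt fin w (acts m.1 [ps ι s]) _
    cases hm with
    | pass => simpa [Wd] using Fine.word ι wt fin (w := w) 0 hk
    | start x c => exact key _ _ _ _ _ trivial (by simp [t1]) (by simp)
    | start1 y hy x =>
      by_cases hys : y = s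
      · subst hys
        rw [acts_cons, act_pp_ps]
        exact Fine.dead ι wt fin (dead_acts hι (x := e x) trivial (by simp) (by simp [t1]))
      · exact key _ _ _ _ _ (hAux _ hy) (by simp [t1, t3]) hys
    | start2 y hy =>
      by_cases hys : y = s
      · subst hys
        rw [acts_cons, act_pp_ps]
        exact Fine.dead ι wt fin (dead_acts hι (x := s) trivial (by simp) (by simp))
      · exact key _ _ _ _ _ (hAux _ hy) (by simp [t4]) hys
    | count y hy q x =>
      by_cases hys : y = s
      · subst hys
        rw [acts_cons, act_pp_ps]
        exact key2 _ _ _ _ _ trivial (by simp [t1]) (by simp)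
      · exact key _ _ _ _ _ hy (by simp [t1, t2, t3]) hys
    | final y hy q =>
      by_cases hys : y = s
      · subst hys
        rw [acts_cons, act_pp_ps]
        exact key2 _ _ _ _ _ trivial (by simp) (by simp)
      · exact key _ _ _ _ _ hy (by simp [t2, t4]) hys
    | sub y hy =>
      by_cases hys : y = s
      · subst hys
        rw [acts_cons, act_pp_ps, acts_nil]
        exact ⟨Or.inr (by simp only; omega), Safe.empty _ (by simp only; omega)⟩
      · exact key _ _ _ _ _ hy (by simp) hys
    | first y hy hs => exact key _ _ _ _ _ hy (by simp) hs
  | word j k hk =>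
    refine ⟨e (w j), trivial, fun m hm => ?_⟩
    obtain ⟨x0, l0, hx0, -, hW⟩ := Wd_head ι w j
    have hact : act (ps ι (e (w j))) (Wd ι w j) = Wd ι w (j + 1) := by
      rw [hW, act_ps_ps, ← hW]; rfl
    rw [hact]
    have hh : ∀ q, (Wd ι w j).head? ≠ some (ps ι (M q)) := by
      intro q h
      rw [hW] at h
      simp only [List.head?_cons, Option.some.injEq] at h
      have := hps h
      subst this
      exact hx0
    cases hm with
    | pass => simpa using Fine.word ι wt fin (w := w) (j + 1) hk
    | start x c =>
      by_cases hx : x = w j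
      · subst hx
        have : acts [pp ι (e (w j)), ps ι (M (some (w j, c)))] (Wd ι w (j + 1)) =
            ps ι (M (some (w j, c))) :: Wd ι w j := by
          rw [Wd, acts_cons, act_pp_ps, acts_cons, acts_nil, hW, act_ps_ps]
        simp only [this]
        refine ⟨Or.inl (by simp), Safe.mode _ _ _ ?_⟩
        have := hw j c
        simp only [finq, wtq]
        omega
      · exact key _ _ _ _ _ trivial (by simp [t1]) (by simpa using hx)
    | start1 y hy x =>
      exact key _ _ _ _ _ (hAux _ hy) (by simp [t1, t3]) (by rintro rfl; exact hy)
    | start2 y hy =>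
      exact key _ _ _ _ _ (hAux _ hy) (by simp [t4]) (by rintro rfl; exact hy)
    | count y hy q x =>
      by_cases hys : y = e (w j)
      · subst hys
        rw [Wd, acts_cons, act_pp_ps]
        exact key2 _ _ _ _ _ trivial (by simp [t1]) (hh q)
      · exact key _ _ _ _ _ hy (by simp [t1, t2, t3]) hys
    | final y hy q =>
      by_cases hys : y = e (w j)
      · subst hys
        rw [Wd, acts_cons, act_pp_ps]
        exact key2 _ _ _ _ _ trivial (by simp) (hh q)
      · exact key _ _ _ _ _ hy (by simp [t2, t4]) hys
    | sub y hy =>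
      by_cases hys : y = e (w j)
      · subst hys
        rw [Wd, acts_cons, act_pp_ps]
        exact Fine.word ι wt fin j (by simp only; omega)
      · exact key _ _ _ _ _ hy (by simp) hys
    | first y hy hs =>
      by_cases hys : y = e (w j)
      · subst hys
        rw [Wd, acts_cons, act_pp_ps]
        exact Fine.word ι wt fin j (by simp only; omega)
      · exact key _ _ _ _ _ hy (by simp) hys
  | mode q0 j k hk =>
    refine ⟨z, trivial, fun m hm => ?_⟩
    rw [act_ps_ps]
    have hdead : ∀ (k : ℤ) (y : Let E) (ys : List SL), Df y → (∀ x ∈ ys, Tame ι x) →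
        Fine ι wt fin w (acts (pp ι y :: ys) (ps ι (M q0) :: Wd ι w j)) k := by
      intro k y ys hy hys
      refine key _ _ _ _ _ hy hys ?_
      rintro rfl
      exact hy
    cases hm with
    | pass => exact Fine.dead ι wt fin ⟨ps ι z, by simp, Or.inr rfl⟩
    | start x c => exact key _ _ _ _ _ trivial (by simp [t1]) (by simp)
    | start1 y hy x =>
      by_cases hys : y = z
      · subst hys
        rw [acts_cons, act_pp_ps]
        exact hdead _ _ _ trivial (by simp [t1])
      · exact key _ _ _ _ _ (hAux _ hy) (by simp [t1, t3]) hys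
    | start2 y hy =>
      by_cases hys : y = z
      · subst hys
        rw [acts_cons, act_pp_ps]
        exact hdead _ _ _ trivial (by simp)
      · exact key _ _ _ _ _ (hAux _ hy) (by simp [t4]) hys
    | count y hy q x =>
      by_cases hys : y = z
      · subst hys
        rw [acts_cons, act_pp_ps]
        by_cases hq : q = q0
        · subst hq
          rw [acts_cons, act_pp_ps]
          cases j with
          | zero =>
            exact key _ _ _ _ _ trivial (by simp [t1]) (by simp)
          | succ j =>
            by_cases hx : x = w j
            · subst hx
              obtain ⟨x0, l0, hx0, -, hW⟩ := Wd_head ι w j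
              have : acts [pp ι (e (w j)), ps ι (M q)] (Wd ι w (j + 1)) =
                  ps ι (M q) :: Wd ι w j := by
                rw [Wd, acts_cons, act_pp_ps, acts_cons, acts_nil, hW, act_ps_ps]
              rw [this]
              refine ⟨Or.inl (by simp), Safe.mode _ _ _ ?_⟩
              rw [Finset.sum_range_succ] at hk
              simp only
              omega
            · exact key _ _ _ _ _ trivial (by simp [t1]) (by simpa using hx)
        · refine key2 _ _ _ _ _ trivial (by simp [t1]) ?_
          simp only [List.head?_cons, ne_eq, Option.some.injEq]
          intro h
          have := hps h
          simp at this
          exact hq this.symm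
      · exact key _ _ _ _ _ hy (by simp [t1, t2, t3]) hys
    | final y hy q =>
      by_cases hys : y = z
      · subst hys
        rw [acts_cons, act_pp_ps]
        by_cases hq : q = q0
        · subst hq
          rw [acts_cons, act_pp_ps]
          cases j with
          | zero =>
            rw [Wd, acts_cons, act_pp_ps, acts_nil]
            simp only [Finset.range_zero, Finset.sum_empty] at hk
            exact ⟨Or.inr (by simp only; omega), Safe.empty _ (by simp only; omega)⟩
          | succ j =>
            exact key _ _ _ _ _ trivial (by simp) (by simp)
        · refine key2 _ _ _ _ _ trivial (by simp) ?_
          simp only [List.head?_cons, ne_eq, Option.some.injEq]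
          intro h
          have := hps h
          simp at this
          exact hq this.symm
      · exact key _ _ _ _ _ hy (by simp [t2, t4]) hys
    | sub y hy =>
      by_cases hys : y = z
      · subst hys
        rw [acts_cons, act_pp_ps, acts_nil]
        exact ⟨Or.inl (by simp), Safe.mode _ _ _ (by simp only; omega)⟩
      · exact key _ _ _ _ _ hy (by simp) hys
    | first y hy hs =>
      by_cases hys : y = z
      · subst hys
        rw [acts_cons, act_pp_ps, acts_nil]
        exact ⟨Or.inl (by simp), Safe.mode _ _ _ (by simp only; omega)⟩
      · exact key _ _ _ _ _ hy (by simp) hys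
  | dead l k hd =>
    obtain ⟨x, hx, hl⟩ : ∃ x : Let E, Df x ∧ act (ps ι x) l = ps ι x :: l := by
      cases l with
      | nil => exact ⟨s, trivial, rfl⟩
      | cons a l =>
        by_cases ha : a = pp ι s
        · refine ⟨z, trivial, ?_⟩
          simp only [act]
          rw [if_neg]
          intro h
          rw [ha] at h
          have := hι (congrArg Prod.fst h)
          simp at this
        · refine ⟨s, trivial, ?_⟩
          simp only [act]
          rw [if_neg]
          exact ha
    refine ⟨x, hx, fun m hm => ?_⟩
    rw [hl]
    rcases move_shape ι wt fin hm with rfl | ⟨y, ys, hy, hm1, hys⟩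
    · obtain ⟨a, ha, ha'⟩ := hd
      exact Fine.dead ι wt fin ⟨a, List.mem_cons_of_mem _ ha, ha'⟩
    · rw [hm1]
      by_cases hyx : y = x
      · subst hyx
        rw [acts_cons, act_pp_ps]
        exact Fine.dead ι wt fin (hd.acts hι hys)
      · exact key _ _ _ _ _ hy hys hyx

theorem defender_wins (hι : Function.Injective ι) {A D : List B5}
    (hA : ∀ x, x ∈ A ↔ ∃ m, IsMove ι wt fin m ∧ x = mB m)
    (hD : ∀ x, x ∈ D ↔ ∃ y : Let E, Df y ∧ x = mB ([ps ι y], 0))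
    (w : ℕ → E) (hw : Good wt fin w) : ¬ BG5AttackerWins A D 1 := by
  refine not_attacker (fun P => ∃ l k, P = cfg l k ∧ Rd l ∧ Safe ι wt fin w l k)
    ⟨[], 0, cfg_nil_zero.symm, trivial, Safe.empty 0 le_rfl⟩ ?_
  rintro P ⟨l, k, rfl, hr, hs⟩
  obtain ⟨x, hx, h⟩ := safe_step ι wt fin hι w hw hs
  refine ⟨mB ([ps ι x], 0), (hD _).2 ⟨x, hx, rfl⟩, fun a ha => ?_⟩
  obtain ⟨m, hm, rfl⟩ := (hA a).1 ha
  have hstep := h m hm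
  have hr' : Rd (acts m.1 (act (ps ι x) l)) := (hr.act _).acts _
  rw [cfg_mB, cfg_mB]
  simp only [acts_cons, acts_nil, add_zero]
  exact ⟨cfg_ne_one hr' hstep.1, _, _, rfl, hr', hstep.2⟩

/-- the stack of a finite word -/
def stk (u : List E) : List SL := u.map (fun x => ps ι (e x)) ++ [ps ι s]

theorem stk_head (u : List E) : ∃ x l, stk ι u = ps ι x :: l := by
  cases u with
  | nil => exact ⟨s, [], rfl⟩
  | cons x u => exact ⟨e x, _, rfl⟩

theorem act_ps_stk (x : Let E) (u : List E) : act (ps ι x) (stk ι u) = ps ι x :: stk ι u := by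
  obtain ⟨y, l, h⟩ := stk_head ι u
  rw [h, act_ps_ps]

theorem win_intro {A D : List B5}
    (hA : ∀ x, x ∈ A ↔ ∃ m, IsMove ι wt fin m ∧ x = mB m)
    (hD : ∀ x, x ∈ D ↔ ∃ y : Let E, Df y ∧ x = mB ([ps ι y], 0))
    {l : List SL} {k : ℤ}
    (h : ∀ x : Let E, Df x → ∃ m, IsMove ι wt fin m ∧
      (cfg (acts m.1 (act (ps ι x) l)) (k + m.2) = 1 ∨
        Win A D (cfg (acts m.1 (act (ps ι x) l)) (k + m.2)))) : Win A D (cfg l k) := by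
  apply Win.intro'
  intro d hd
  obtain ⟨x, hx, rfl⟩ := (hD d).1 hd
  obtain ⟨m, hm, h'⟩ := h x hx
  refine ⟨mB m, (hA _).2 ⟨m, hm, rfl⟩, ?_⟩
  rw [cfg_mB, cfg_mB]
  simpa using h'

theorem win_mode {A D : List B5}
    (hA : ∀ x, x ∈ A ↔ ∃ m, IsMove ι wt fin m ∧ x = mB m)
    (hD : ∀ x, x ∈ D ↔ ∃ y : Let E, Df y ∧ x = mB ([ps ι y], 0))
    (q : Option (E × Fin 3)) (u : List E) (k : ℤ)
    (hk : 0 ≤ k + finq fin q + (u.map (wtq wt q)).sum) :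
    Win A D (cfg (ps ι (M q) :: stk ι u) k) := by
  induction u generalizing k with
  | nil =>
    simp only [List.map_nil, List.sum_nil, add_zero] at hk
    obtain ⟨t, ht⟩ := Int.eq_ofNat_of_zero_le hk
    clear hk
    induction t generalizing k with
    | zero =>
      refine win_intro ι wt fin hA hD fun x hx => ⟨_, IsMove.final x hx q, Or.inl ?_⟩
      rw [act_ps_ps, acts_cons, act_pp_ps, acts_cons, act_pp_ps, stk, List.map_nil,
        List.nil_append, acts_cons, act_pp_ps, acts_nil]
      simp only [ht]
      exact cfg_nil_zero
    | succ t ih =>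
      refine win_intro ι wt fin hA hD fun x hx => ⟨_, IsMove.sub x hx, Or.inr ?_⟩
      rw [act_ps_ps, acts_cons, act_pp_ps, acts_nil]
      apply ih
      push_cast at ht
      simp only
      omega
  | cons y u ih =>
    refine win_intro ι wt fin hA hD fun x hx => ⟨_, IsMove.count x hx q y, Or.inr ?_⟩
    have : stk ι (y :: u) = ps ι (e y) :: stk ι u := rfl
    rw [act_ps_ps, acts_cons, act_pp_ps, acts_cons, act_pp_ps, this, acts_cons, act_pp_ps,
      acts_cons, act_ps_stk, acts_nil]
    apply ih
    simp only [List.map_cons, List.sum_cons] at hk ⊢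
    omega

theorem win_step {A D : List B5}
    (hA : ∀ x, x ∈ A ↔ ∃ m, IsMove ι wt fin m ∧ x = mB m)
    (hD : ∀ x, x ∈ D ↔ ∃ y : Let E, Df y ∧ x = mB ([ps ι y], 0))
    (u : List E) (h : ¬ Win A D (cfg (stk ι u) 0)) :
    ∃ x, ¬ Win A D (cfg (stk ι (x :: u)) 0) ∧
      ∀ c, fin x c + (u.map (wt x c)).sum < 0 := by
  by_contra hcon
  push Not at hcon
  apply h
  refine win_intro ι wt fin hA hD fun x hx => ?_
  rw [act_ps_stk]
  have haux : Aux x → ∃ m, IsMove ι wt fin m ∧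
      (cfg (acts m.1 (ps ι x :: stk ι u)) (0 + m.2) = 1 ∨
        Win A D (cfg (acts m.1 (ps ι x :: stk ι u)) (0 + m.2))) := by
    intro hx
    cases u with
    | nil =>
      refine ⟨_, IsMove.start2 x hx, Or.inl ?_⟩
      rw [acts_cons, act_pp_ps, stk, List.map_nil,
        List.nil_append, acts_cons, act_pp_ps, acts_nil]
      exact cfg_nil_zero
    | cons y u =>
      refine ⟨_, IsMove.start1 x hx y, Or.inr ?_⟩
      have : stk ι (y :: u) = ps ι (e y) :: stk ι u := rfl
      rw [acts_cons, act_pp_ps, this, acts_cons, act_pp_ps, acts_cons, act_ps_stk, acts_nil]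
      apply win_mode ι wt fin hA hD
      have : wtq wt none = fun _ : E => (0 : ℤ) := rfl
      simp [finq, this]
  cases x with
  | s => exact haux trivial
  | z => exact haux trivial
  | M q => exact hx.elim
  | e x =>
    by_cases hw : Win A D (cfg (stk ι (x :: u)) 0)
    · exact ⟨_, IsMove.pass, Or.inr (by simpa [stk] using hw)⟩
    · obtain ⟨c, hc⟩ := hcon x hw
      refine ⟨_, IsMove.start x c, Or.inr ?_⟩
      rw [acts_cons, act_pp_ps, acts_cons, act_ps_stk, acts_nil]
      apply win_mode ι wt fin hA hD
      have : wtq wt (some (x, c)) = wt x c := rfl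
      simpa [finq, this] using hc

theorem attacker_wins {A D : List B5}
    (hA : ∀ x, x ∈ A ↔ ∃ m, IsMove ι wt fin m ∧ x = mB m)
    (hD : ∀ x, x ∈ D ↔ ∃ y : Let E, Df y ∧ x = mB ([ps ι y], 0))
    (hw : ¬ ∃ w, Good wt fin w) : BG5AttackerWins A D 1 := by
  have hne : A ≠ [] := List.ne_nil_of_mem ((hA _).2 ⟨_, IsMove.pass, rfl⟩)
  apply attacker_of_win hne
  rw [← cfg_nil_zero]
  have h0 : Win A D (cfg (stk ι ([] : List E)) 0) := by
    by_contra h0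
    choose f hf hf' using win_step ι wt fin hA hD
    let U : ℕ → {u : List E // ¬ Win A D (cfg (stk ι u) 0)} := fun n =>
      Nat.rec ⟨[], h0⟩ (fun _ u => ⟨f u.1 u.2 :: u.1, hf u.1 u.2⟩) n
    let w : ℕ → E := fun n => f (U n).1 (U n).2
    have hU : ∀ n, (U (n + 1)).1 = w n :: (U n).1 := fun n => rfl
    have hsum : ∀ (g : E → ℤ) n, ((U n).1.map g).sum = ∑ i ∈ Finset.range n, g (w i) := by
      intro g n
      induction n with
      | zero => rfl
      | succ n ih => rw [hU, List.map_cons, List.sum_cons, ih, Finset.sum_range_succ, add_comm]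
    refine hw ⟨w, fun N c => ?_⟩
    rw [← hsum]
    exact hf' _ _ c
  refine win_intro ι wt fin hA hD fun x hx => ?_
  show ∃ m, IsMove ι wt fin m ∧ (cfg (acts m.1 [ps ι x]) (0 + m.2) = 1 ∨
        Win A D (cfg (acts m.1 [ps ι x]) (0 + m.2)))
  by_cases hs : x = s
  · subst hs
    exact ⟨_, IsMove.pass, Or.inr (by simpa [stk] using h0)⟩
  · refine ⟨_, IsMove.first x hx hs, Or.inl ?_⟩
    rw [acts_cons, act_pp_ps, acts_nil]
    exact cfg_nil_zero

end Word

end BG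

/-! ### Loop programs over registers -/

namespace BG

open Function in
/-- programs: `loop r p` is `while r > 0 do (r := r - 1; p)` -/
inductive Prog : Type
  | nop : Prog
  | inc : ℕ → Prog
  | seq : Prog → Prog → Prog
  | loop : ℕ → Prog → Prog
  deriving Countable

open Prog Function

/-- big-step semantics -/
inductive Ev : Prog → (ℕ → ℕ) → (ℕ → ℕ) → Prop
  | nop (v) : Ev nop v v
  | inc (r v) : Ev (inc r) v (update v r (v r + 1))
  | seq {p q v v1 v2} : Ev p v v1 → Ev q v1 v2 → Ev (seq p q) v v2
  | loop0 {r p v} : v r = 0 → Ev (loop r p) v v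
  | loopS {r p v v1 v2} : v r ≠ 0 → Ev p (update v r (v r - 1)) v1 → Ev (loop r p) v1 v2 →
      Ev (loop r p) v v2

theorem Ev.det {p v v1} (h : Ev p v v1) : ∀ {v2}, Ev p v v2 → v1 = v2 := by
  induction h with
  | nop v => intro v2 h; cases h; rfl
  | inc r v => intro v2 h; cases h; rfl
  | seq _ _ ih1 ih2 =>
    intro v2 h
    cases h with
    | seq h1 h2 =>
      have := ih1 h1; subst this
      exact ih2 h2
  | loop0 h0 =>
    intro v2 h
    cases h with
    | loop0 _ => rfl
    | loopS h1 _ _ => exact absurd h0 h1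
  | loopS h0 _ _ ih1 ih2 =>
    intro v2 h
    cases h with
    | loop0 h1 => exact absurd h1 h0
    | loopS _ h1 h2 =>
      have := ih1 h1; subst this
      exact ih2 h2

theorem Ev.cast {p v v1 v2} (h : Ev p v v1) (e : v1 = v2) : Ev p v v2 := e ▸ h

theorem Ev_loop (r : ℕ) (p : Prog) (N : ℕ) (I : ℕ → ℕ → ℕ) (h : ∀ i ≤ N, I i r = N - i)
    (hs : ∀ i < N, Ev p (update (I i) r (N - i - 1)) (I (i + 1))) :
    Ev (loop r p) (I 0) (I N) := by
  have key : ∀ j ≤ N, Ev (loop r p) (I (N - j)) (I N) := by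
    intro j
    induction j with
    | zero => intro _; exact Ev.loop0 (by simpa using h N le_rfl)
    | succ j ih =>
      intro hj
      have h1 := h (N - (j + 1)) (by omega)
      have h2 := hs (N - (j + 1)) (by omega)
      refine Ev.loopS (by omega) (v1 := I (N - j)) ?_ (ih (by omega))
      rw [h1]
      rwa [show N - (j + 1) + 1 = N - j by omega] at h2
  simpa using key N le_rfl

theorem Ev_clear (r : ℕ) (v : ℕ → ℕ) : Ev (loop r nop) v (update v r 0) := by
  have := Ev_loop r nop (v r) (fun i => update v r (v r - i)) (by simp) (by
    intro i hi
    refine (Ev.nop _).cast ?_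
    funext x; simp only [update_apply]; split_ifs <;> omega)
  simpa using this

theorem Ev_move (a c : ℕ) (hac : a ≠ c) (v : ℕ → ℕ) :
    Ev (loop a (inc c)) v (update (update v c (v c + v a)) a 0) := by
  have := Ev_loop a (inc c) (v a) (fun i => update (update v c (v c + i)) a (v a - i))
    (by simp) (by
    intro i hi
    refine (Ev.inc _ _).cast ?_
    funext x; simp only [update_apply]
    split_ifs <;> first | omega | simp_all)
  simpa using this

theorem Ev_copy (a c t : ℕ) (hac : a ≠ c) (hat : a ≠ t) (hct : c ≠ t) (v : ℕ → ℕ)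
    (ht : v t = 0) :
    Ev (seq (loop a (seq (inc c) (inc t))) (loop t (inc a))) v (update v c (v c + v a)) := by
  have h1 := Ev_loop a (seq (inc c) (inc t)) (v a)
    (fun i => update (update (update v c (v c + i)) t i) a (v a - i))
    (by simp) (by
    intro i hi
    refine Ev.seq (Ev.inc _ _) ((Ev.inc _ _).cast ?_)
    funext x; simp only [update_apply]
    split_ifs <;> first | omega | simp_all)
  have e0 : update (update (update v c (v c + 0)) t 0) a (v a - 0) = v := by
    funext x; simp only [update_apply]
    split_ifs <;> simp_all
  have h2 : Ev (loop a (seq (inc c) (inc t))) v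
      (update (update (update v c (v c + v a)) t (v a)) a 0) := by
    beta_reduce at h1
    rw [e0] at h1
    simpa using h1
  refine Ev.seq h2 ((Ev_move t a hat.symm _).cast ?_)
  funext x; simp only [update_apply]
  split_ifs <;> simp_all

/-- computability of total functions by loop programs -/
def Cmp {n : ℕ} (f : List.Vector ℕ n → ℕ) : Prop :=
  ∀ (ins : Fin n → ℕ) (out b : ℕ), (∀ i, ins i < b) → (∀ i, ins i ≠ out) → out < b →
    ∃ p, ∀ v : ℕ → ℕ, (∀ r, b ≤ r → v r = 0) → v out = 0 →
      Ev p v (update v out (f (List.Vector.ofFn fun i => v (ins i))))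

theorem Cmp_get {n : ℕ} (i : Fin n) : Cmp (fun v => v.get i) := by
  intro ins out b h1 h2 h3
  refine ⟨_, fun v hv ho => (Ev_copy (ins i) out b (h2 i) ?_ ?_ v (hv b le_rfl)).cast ?_⟩
  · exact (h1 i).ne
  · exact h3.ne
  · simp [ho]

theorem Cmp_succ : @Cmp 1 (fun v => Nat.succ v.head) := by
  intro ins out b h1 h2 h3
  refine ⟨_, fun v hv ho =>
    Ev.seq (Ev_copy (ins 0) out b (h2 0) ?_ ?_ v (hv b le_rfl)) ((Ev.inc out _).cast ?_)⟩
  · exact (h1 0).ne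
  · exact h3.ne
  · funext x; simp only [update_apply]
    have : (List.Vector.ofFn fun i : Fin 1 => v (ins i)).head = v (ins 0) := rfl
    split_ifs <;> simp_all

theorem Ev_clears (b k : ℕ) :
    ∃ p, ∀ v : ℕ → ℕ, Ev p v (fun r => if b ≤ r ∧ r < b + k then 0 else v r) := by
  induction k with
  | zero =>
    refine ⟨nop, fun v => (Ev.nop v).cast ?_⟩
    funext r; rw [if_neg (by omega)]
  | succ k ih =>
    obtain ⟨p, hp⟩ := ih
    refine ⟨_, fun v => Ev.seq (hp v) ((Ev_clear (b + k) _).cast ?_)⟩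
    funext r; simp only [update_apply]
    split_ifs <;> omega

theorem Cmp_comp {m n : ℕ} {f : List.Vector ℕ n → ℕ} (g : Fin n → List.Vector ℕ m → ℕ)
    (hf : Cmp f) (hg : ∀ i, Cmp (g i)) :
    Cmp (fun a => f (List.Vector.ofFn fun i => g i a)) := by
  intro ins out b h1 h2 h3
  have hG : ∀ k ≤ n, ∃ p, ∀ v : ℕ → ℕ, (∀ r, b ≤ r → v r = 0) →
      Ev p v (fun r => if h : b ≤ r ∧ r < b + n ∧ r < b + k then
        g ⟨r - b, by omega⟩ (List.Vector.ofFn fun i => v (ins i)) else v r) := by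
    intro k
    induction k with
    | zero =>
      intro _
      refine ⟨nop, fun v _ => (Ev.nop v).cast ?_⟩
      funext r; rw [dif_neg (by omega)]
    | succ k ih =>
      intro hk
      obtain ⟨p, hp⟩ := ih (by omega)
      obtain ⟨q, hq⟩ := hg ⟨k, by omega⟩ ins (b + k) (b + n)
        (fun i => lt_of_lt_of_le (h1 i) (by omega)) (fun i => by have := h1 i; omega) (by omega)
      refine ⟨seq p q, fun v hv => Ev.seq (hp v hv) ((hq _ ?_ ?_).cast ?_)⟩
      · intro r hr
        rw [dif_neg (by omega)]
        exact hv r (by omega)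
      · rw [dif_neg (by omega)]
        exact hv _ (by omega)
      · have e : (fun i => (fun r => if h : b ≤ r ∧ r < b + n ∧ r < b + k then
            g ⟨r - b, by omega⟩ (List.Vector.ofFn fun i => v (ins i)) else v r) (ins i))
            = fun i => v (ins i) := by
          funext i
          have := h1 i
          simp only
          rw [dif_neg (by omega)]
        rw [e]
        funext r
        simp only [update_apply]
        by_cases hr : r = b + k
        · subst hr
          rw [if_pos rfl, dif_pos (by omega)]
          congr 1
          congr 1
          simp
        · rw [if_neg hr]
          by_cases hr2 : b ≤ r ∧ r < b + n ∧ r < b + k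
          · rw [dif_pos hr2, dif_pos (by omega)]
          · rw [dif_neg hr2, dif_neg (by omega)]
  obtain ⟨p, hp⟩ := hG n le_rfl
  obtain ⟨q, hq⟩ := hf (fun i => b + i) out (b + n) (fun i => by omega) (fun i => by omega)
    (by omega)
  obtain ⟨c, hc⟩ := Ev_clears b n
  refine ⟨seq p (seq q c), fun v hv ho => Ev.seq (hp v hv) (Ev.seq (hq _ ?_ ?_)
    ((hc _).cast ?_))⟩
  · intro r hr
    rw [dif_neg (by omega)]
    exact hv r (by omega)
  · rw [dif_neg (by omega)]
    exact ho
  · funext r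
    simp only [update_apply]
    by_cases hr : r = out
    · subst hr
      rw [if_neg (by omega), if_pos rfl, if_pos rfl]
      congr 1
      congr 1
      funext i
      rw [dif_pos (by omega)]
      congr 1
      ext; simp
    · rw [if_neg hr]
      by_cases hr2 : b ≤ r ∧ r < b + n
      · rw [if_pos hr2, if_neg hr, hv r hr2.1]
      · rw [if_neg hr2, dif_neg (by omega), if_neg hr]

theorem Cmp_prec {n : ℕ} {f : List.Vector ℕ n → ℕ} {g : List.Vector ℕ (n + 2) → ℕ}
    (hf : Cmp f) (hg : Cmp g) :
    Cmp (fun v : List.Vector ℕ (n + 1) =>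
      v.head.rec (f v.tail) fun y IH => g (y ::ᵥ IH ::ᵥ v.tail)) := by
  intro ins out b h1 h2 h3
  -- acc = b, y = b+1, cnt = b+2, tmp = b+3
  obtain ⟨pf, hpf⟩ := hf (fun i => ins i.succ) b (b + 4)
    (fun i => by have := h1 i.succ; omega) (fun i => by have := h1 i.succ; omega) (by omega)
  obtain ⟨pg, hpg⟩ := hg (Fin.cons (b + 1) (Fin.cons b fun i => ins i.succ)) (b + 3) (b + 4)
    (by
      intro i
      refine Fin.cases ?_ (fun i => ?_) i
      · simp
      · refine Fin.cases ?_ (fun i => ?_) i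
        · simp
        · simp only [Fin.cons_succ]; have := h1 i.succ; omega)
    (by
      intro i
      refine Fin.cases ?_ (fun i => ?_) i
      · simp
      · refine Fin.cases ?_ (fun i => ?_) i
        · simp
        · simp only [Fin.cons_succ]; have := h1 i.succ; omega)
    (by omega)
  refine ⟨seq (seq (loop (ins 0) (seq (inc (b + 2)) (inc (b + 4)))) (loop (b + 4) (inc (ins 0))))
    (seq pf (seq
      (loop (b + 2) (seq pg (seq (loop b nop) (seq (loop (b + 3) (inc b)) (inc (b + 1))))))
      (seq (loop b (inc out)) (loop (b + 1) nop)))), fun v hv ho => ?_⟩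
  have hi0 := h1 0
  set N := v (ins 0) with hN
  set V := List.Vector.ofFn fun i : Fin n => v (ins i.succ) with hV
  let R : ℕ → ℕ := fun k => Nat.rec (f V) (fun y IH => g (y ::ᵥ IH ::ᵥ V)) k
  have hgoal : (List.Vector.ofFn fun i => v (ins i)).head = N ∧
    (List.Vector.ofFn fun i => v (ins i)).tail = V := ⟨rfl, by
      simp [hV, List.Vector.ofFn]⟩
  beta_reduce
  rw [hgoal.1, hgoal.2]
  refine Ev.seq (Ev_copy (ins 0) (b + 2) (b + 4) (by omega) (by omega) (by omega) v
    (hv _ (by omega))) ?_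
  refine Ev.seq (hpf _ ?_ ?_) ?_
  · intro r hr
    rw [update_apply, if_neg (by omega)]
    exact hv r (by omega)
  · rw [update_apply, if_neg (by omega)]
    exact hv b le_rfl
  have e1 : (fun i : Fin n => update v (b + 2) (v (b + 2) + v (ins 0)) (ins i.succ))
      = fun i => v (ins i.succ) := by
    funext i
    have := h1 i.succ
    rw [update_apply, if_neg (by omega)]
  rw [e1]
  -- loop invariant
  let I : ℕ → ℕ → ℕ := fun k r =>
    if r = b then R k else if r = b + 1 then k else if r = b + 2 then N - k else v r
  have hI0 : update (update v (b + 2) (v (b + 2) + v (ins 0))) b (f V) = I 0 := by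
    funext r
    simp only [I, update_apply]
    have := hv (b + 1) (by omega)
    have := hv (b + 2) (by omega)
    split_ifs <;> simp_all [R]
  rw [← hV, hI0]
  refine Ev.seq (Ev_loop (b + 2) _ N I (by intro i _; simp [I]) ?_) ?_
  · intro k hk
    have e2 : (fun i : Fin (n + 2) => update (I k) (b + 2) (N - k - 1)
        ((Fin.cons (b + 1) (Fin.cons b fun i => ins i.succ) : Fin (n + 2) → ℕ) i)) =
        Fin.cons k (Fin.cons (R k) (fun i => v (ins i.succ))) := by
      funext i
      refine Fin.cases ?_ (fun i => ?_) i
      · simp [I, update_apply]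
      · refine Fin.cases ?_ (fun i => ?_) i
        · simp [I, update_apply]
        · simp only [Fin.cons_succ, I, update_apply]
          have := h1 i.succ
          rw [if_neg (by omega), if_neg (by omega), if_neg (by omega), if_neg (by omega)]
    have e3 : (List.Vector.ofFn (Fin.cons k (Fin.cons (R k) (fun i => v (ins i.succ))) :
        Fin (n + 2) → ℕ)) = k ::ᵥ R k ::ᵥ V := by
      simp [List.Vector.ofFn, hV]
    refine Ev.seq (hpg _ ?_ ?_) ?_
    · intro r hr
      simp only [I, update_apply]
      rw [if_neg (by omega), if_neg (by omega), if_neg (by omega), if_neg (by omega)]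
      exact hv r (by omega)
    · simp only [I, update_apply]
      rw [if_neg (by omega), if_neg (by omega), if_neg (by omega), if_neg (by omega)]
      exact hv _ (by omega)
    rw [e2, e3]
    refine Ev.seq (Ev_clear b _) (Ev.seq (Ev_move (b + 3) b (by omega) _) ((Ev.inc _ _).cast ?_))
    have hR : R (k + 1) = g (k ::ᵥ R k ::ᵥ V) := rfl
    funext r
    have := hv (b + 3) (by omega)
    simp only [I, update_apply]
    split_ifs <;> first | omega | simp_all
  · refine Ev.seq (Ev_move b out (by omega) _) ((Ev_clear _ _).cast ?_)
    funext r
    have := hv (b + 1) (by omega)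
    have := hv (b + 2) (by omega)
    have := hv b (by omega)
    have hRN : R N = Nat.rec (f V) (fun y IH => g (y ::ᵥ IH ::ᵥ V)) N := rfl
    rw [← hRN]
    simp only [I, update_apply]
    split_ifs <;> first | omega | simp_all

theorem Cmp_of_prim {n : ℕ} {f : List.Vector ℕ n → ℕ} (hf : Nat.Primrec' f) : Cmp f := by
  induction hf with
  | zero =>
    intro ins out b h1 h2 h3
    refine ⟨nop, fun v hv ho => (Ev.nop v).cast ?_⟩
    funext r
    rw [update_apply]
    split_ifs with h
    · rw [h, ho]
    · rfl
  | succ => exact Cmp_succ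
  | get i => exact Cmp_get i
  | comp g _ _ ihf ihg => exact Cmp_comp g ihf ihg
  | prec _ _ ihf ihg => exact Cmp_prec ihf ihg

/-- initial register contents -/
def v0 (n : ℕ) : ℕ → ℕ := fun r => if r = 0 then n else 0

theorem exists_search {f : List.Vector ℕ 2 → ℕ} (hf : Nat.Primrec' f) (hb : ∀ v, f v ≤ 1) :
    ∃ p, ∀ n, (∃ v', Ev p (v0 n) v') ↔ ∃ k, f (k ::ᵥ n ::ᵥ List.Vector.nil) = 0 := by
  obtain ⟨p, hp⟩ := Cmp_of_prim hf ![1, 0] 2 3 (by decide) (by decide) (by decide)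
  let F : ℕ → ℕ → ℕ := fun n k => f (k ::ᵥ n ::ᵥ List.Vector.nil)
  let S : ℕ → ℕ → ℕ → ℕ → ℕ := fun n k t r =>
    if r = 0 then n else if r = 1 then k else if r = 2 then t else 0
  have hS : ∀ n k, Ev p (S n k 0) (S n k (F n k)) := by
    intro n k
    refine (hp (S n k 0) ?_ ?_).cast ?_
    · intro r hr; simp only [S]; rw [if_neg (by omega), if_neg (by omega), if_neg (by omega)]
    · simp [S]
    · have : (List.Vector.ofFn fun i : Fin 2 => S n k 0 ((![1, 0] : Fin 2 → ℕ) i))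
          = k ::ᵥ n ::ᵥ List.Vector.nil := rfl
      rw [this]
      funext r
      simp only [S, update_apply, F]
      split_ifs <;> first | omega | simp_all
  have hbody : ∀ n k, F n k ≠ 0 →
      Ev (seq (inc 1) p) (update (S n k (F n k)) 2 (S n k (F n k) 2 - 1))
        (S n (k + 1) (F n (k + 1))) := by
    intro n k h
    have h1 : F n k = 1 := by have := hb (k ::ᵥ n ::ᵥ List.Vector.nil); simp only [F] at *; omega
    refine Ev.seq ((Ev.inc _ _).cast ?_) (hS n (k + 1))
    rw [h1]
    funext r
    simp only [S, update_apply]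
    split_ifs <;> first | omega | simp_all
  refine ⟨seq p (loop 2 (seq (inc 1) p)), fun n => ⟨?_, ?_⟩⟩
  · rintro ⟨v', h⟩
    have hv0 : v0 n = S n 0 0 := by
      funext r; simp only [v0, S]; split_ifs <;> rfl
    rw [hv0] at h
    cases h with
    | seq h1 h2 =>
      have := (hS n 0).det h1
      subst this
      by_contra hne
      have hne' : ∀ k, F n k ≠ 0 := fun k hk => hne ⟨k, hk⟩
      have key : ∀ q u u', Ev q u u' → q = loop 2 (seq (inc 1) p) →
          ∀ k, u = S n k (F n k) → False := by
        intro q u u' h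
        induction h with
        | nop => intro h; cases h
        | inc => intro h; cases h
        | seq => intro h; cases h
        | loop0 h0 =>
          intro hq k hk
          cases hq
          apply hne' k
          rw [hk] at h0
          simpa [S] using h0
        | loopS h0 hb1 _ _ ih =>
          intro hq k hk
          have hq' := hq
          cases hq
          subst hk
          exact ih hq' (k + 1) ((hb1.det (hbody n k (hne' k))))
      exact key _ _ _ h2 rfl 0 rfl
  · rintro ⟨K, hK⟩
    have hv0 : v0 n = S n 0 0 := by
      funext r; simp only [v0, S]; split_ifs <;> rfl
    rw [hv0]
    have key : ∀ j k, F n (k + j) = 0 →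
        ∃ v', Ev (loop 2 (seq (inc 1) p)) (S n k (F n k)) v' := by
      intro j
      induction j with
      | zero => intro k hk; exact ⟨_, Ev.loop0 (by simpa [S] using hk)⟩
      | succ j ih =>
        intro k hk
        by_cases h0 : F n k = 0
        · exact ⟨_, Ev.loop0 (by simpa [S] using h0)⟩
        · obtain ⟨v', h'⟩ := ih (k + 1) (by rwa [show k + 1 + j = k + (j + 1) by omega])
          exact ⟨v', Ev.loopS (by simpa [S] using h0) (hbody n k h0) h'⟩
    obtain ⟨vend, hend⟩ := key K 0 (by simpa [F] using hK)
    exact ⟨vend, Ev.seq (hS n 0) hend⟩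

/-- A loop program with undecidable halting problem. -/
theorem exists_universal :
    ∃ p, ¬ ComputablePred (fun n => ∃ v', Ev p (v0 n) v') := by
  let f : List.Vector ℕ 2 → ℕ := fun v =>
    if (Nat.Partrec.Code.evaln v.head (Denumerable.ofNat Nat.Partrec.Code v.tail.head) 0).isSome
    then 0 else 1
  have hf : Primrec f := by
    have h1 : Primrec fun v : List.Vector ℕ 2 => Nat.Partrec.Code.evaln v.head
        (Denumerable.ofNat Nat.Partrec.Code v.tail.head) 0 :=
      Nat.Partrec.Code.primrec_evaln.comp
        (Primrec.pair (Primrec.pair Primrec.vector_head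
          ((Primrec.ofNat Nat.Partrec.Code).comp (Primrec.vector_head.comp Primrec.vector_tail)))
          (Primrec.const 0))
    exact Primrec.ite (Primrec.eq.comp (Primrec.option_isSome.comp h1) (Primrec.const true))
      (Primrec.const 0) (Primrec.const 1)
  obtain ⟨p, hp⟩ := exists_search (Nat.Primrec'.of_prim hf)
    (fun v => by simp only [f]; split_ifs <;> simp)
  refine ⟨p, fun hc => ?_⟩
  refine ComputablePred.halting_problem 0 ?_
  have hred : (fun c : Nat.Partrec.Code => (Nat.Partrec.Code.eval c 0).Dom) =
      fun c => ∃ v', Ev p (v0 (Encodable.encode c)) v' := by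
    funext c
    rw [hp]
    apply propext
    simp only [f]
    rw [Part.dom_iff_mem]
    constructor
    · rintro ⟨y, hy⟩
      obtain ⟨k, hk⟩ := Nat.Partrec.Code.evaln_complete.mp hy
      refine ⟨k, ?_⟩
      rw [if_pos]
      simp only [List.Vector.head_cons, List.Vector.tail_cons, Denumerable.ofNat_encode]
      rw [Option.isSome_iff_exists]
      exact ⟨y, hk⟩
    · rintro ⟨k, hk⟩
      have : (Nat.Partrec.Code.evaln k c 0).isSome := by
        by_contra hne
        simp [hne] at hk
      obtain ⟨y, hy⟩ := Option.isSome_iff_exists.mp this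
      exact ⟨y, Nat.Partrec.Code.evaln_sound hy⟩
  rw [hred]
  exact ComputablePred.computable_of_manyOneReducible
    ⟨fun c => Encodable.encode c, Computable.encode, fun _ => Iff.rfl⟩ hc

end BG

/-! ### Programs to words -/

namespace BG

open Prog Function

/-- halting of continuation stacks -/
inductive Halt : List Prog → (ℕ → ℕ) → Prop
  | nil (v) : Halt [] v
  | nop {k v} : Halt k v → Halt (nop :: k) v
  | inc {r k v} : Halt k (update v r (v r + 1)) → Halt (inc r :: k) v
  | seq {p q k v} : Halt (p :: q :: k) v → Halt (seq p q :: k) v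
  | loop0 {r p k v} : v r = 0 → Halt k v → Halt (loop r p :: k) v
  | loopS {r p k v} : v r ≠ 0 → Halt (p :: loop r p :: k) (update v r (v r - 1)) →
      Halt (loop r p :: k) v

theorem halt_of_ev {p v v'} (h : Ev p v v') : ∀ k, Halt k v' → Halt (p :: k) v := by
  induction h with
  | nop v => exact fun k h => Halt.nop h
  | inc r v => exact fun k h => Halt.inc h
  | seq _ _ ih1 ih2 => exact fun k h => Halt.seq (ih1 _ (ih2 _ h))
  | loop0 h0 => exact fun k h => Halt.loop0 h0 h
  | loopS h0 _ _ ih1 ih2 => exact fun k h => Halt.loopS h0 (ih1 _ (ih2 _ h))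

/-- big-step evaluation of a continuation stack -/
def EvL : List Prog → (ℕ → ℕ) → Prop
  | [], _ => True
  | p :: k, v => ∃ v', Ev p v v' ∧ EvL k v'

theorem evL_of_halt {κ v} (h : Halt κ v) : EvL κ v := by
  induction h with
  | nil v => trivial
  | nop _ ih => exact ⟨_, Ev.nop _, ih⟩
  | inc _ ih => exact ⟨_, Ev.inc _ _, ih⟩
  | seq _ ih =>
    obtain ⟨v1, h1, v2, h2, h3⟩ := ih
    exact ⟨v2, Ev.seq h1 h2, h3⟩
  | loop0 h0 _ ih => exact ⟨_, Ev.loop0 h0, ih⟩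
  | loopS h0 _ ih =>
    obtain ⟨v1, h1, v2, h2, h3⟩ := ih
    exact ⟨v2, Ev.loopS h0 h1 h2, h3⟩

theorem halt_iff (p : Prog) (v : ℕ → ℕ) : Halt [p] v ↔ ∃ v', Ev p v v' := by
  constructor
  · intro h
    obtain ⟨v', h, _⟩ := evL_of_halt h
    exact ⟨v', h⟩
  · rintro ⟨v', h⟩
    exact halt_of_ev h [] (Halt.nil _)

/-- successor continuation -/
def tgt : List Prog → Bool → List Prog
  | [], _ => []
  | nop :: k, _ => k
  | inc _ :: k, _ => k
  | seq p q :: k, _ => p :: q :: k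
  | loop r p :: k, true => p :: loop r p :: k
  | loop _ _ :: k, false => k

/-- register change -/
def dl : List Prog → Bool → ℕ → ℤ
  | inc r :: _, _, x => if x = r then 1 else 0
  | loop r _ :: _, true, x => if x = r then -1 else 0
  | _, _, _ => 0

theorem closed_aux (p : Prog) : ∀ k : List Prog, ∃ S : Set (List Prog), S.Finite ∧
    p :: k ∈ S ∧ ∀ κ ∈ S, ∀ b, tgt κ b ∈ S ∨ tgt κ b = k := by
  induction p with
  | nop => exact fun k => ⟨{nop :: k}, Set.finite_singleton _, rfl, by
      rintro _ rfl b; exact Or.inr rfl⟩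
  | inc r => exact fun k => ⟨{inc r :: k}, Set.finite_singleton _, rfl, by
      rintro _ rfl b; exact Or.inr rfl⟩
  | seq p q ihp ihq =>
    intro k
    obtain ⟨S, hS, hp, hc⟩ := ihp (q :: k)
    obtain ⟨T, hT, hq, hd⟩ := ihq k
    refine ⟨insert (seq p q :: k) (S ∪ T), (hS.union hT).insert _, Set.mem_insert _ _, ?_⟩
    rintro κ (rfl | h | h) b
    · exact Or.inl (Or.inr (Or.inl hp))
    · rcases hc κ h b with h | h
      · exact Or.inl (Or.inr (Or.inl h))
      · rw [h]; exact Or.inl (Or.inr (Or.inr hq))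
    · rcases hd κ h b with h | h
      · exact Or.inl (Or.inr (Or.inr h))
      · exact Or.inr h
  | loop r p ihp =>
    intro k
    obtain ⟨S, hS, hp, hc⟩ := ihp (loop r p :: k)
    refine ⟨insert (loop r p :: k) S, hS.insert _, Set.mem_insert _ _, ?_⟩
    rintro κ (rfl | h) b
    · cases b
      · exact Or.inr rfl
      · exact Or.inl (Or.inr hp)
    · rcases hc κ h b with h | h
      · exact Or.inl (Or.inr h)
      · rw [h]; exact Or.inl (Or.inl rfl)

theorem exists_closed (p : Prog) : ∃ S : Set (List Prog), S.Finite ∧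
    [p] ∈ S ∧ ∀ κ ∈ S, ∀ b, tgt κ b ∈ S := by
  obtain ⟨S, hS, hp, hc⟩ := closed_aux p []
  refine ⟨insert [] S, hS.insert _, Or.inr hp, ?_⟩
  rintro κ (rfl | h) b
  · exact Or.inl rfl
  · rcases hc κ h b with h | h
    · exact Or.inr h
    · exact Or.inl h

section Enc

variable (p : Prog) (S : Set (List Prog)) (code : List Prog → ℕ)

/-- edges -/
abbrev Edge : Type := S × Bool

/-- weights of the third check -/
def wt2 : List Prog → Bool → (ℕ → ℤ) → ℤ
  | loop r _ :: _, true, d => - d r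
  | loop r _ :: _, false, d => d r
  | _, _, _ => 0

/-- constant part of the third check -/
def base2 : List Prog → Bool → ℤ
  | [], _ => 0
  | loop _ _ :: _, true => 0
  | _, _ => -1

/-- weights -/
def ewt (x : Edge S) (c : Fin 3) (y : Edge S) : ℤ :=
  if c = 0 then (code (tgt y.1 y.2) : ℤ) - code y.1
  else if c = 1 then (code y.1 : ℤ) - code (tgt y.1 y.2)
  else wt2 x.1 x.2 (dl y.1 y.2)

/-- constant part of the final weights -/
def ebase (x : Edge S) (c : Fin 3) : ℤ :=
  if c = 0 then (code [p] : ℤ) - code x.1 - 1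
  else if c = 1 then (code x.1 : ℤ) - code [p] - 1
  else base2 x.1 x.2

/-- slope of the final weights -/
def eslope (x : Edge S) (c : Fin 3) : ℤ :=
  if c = 0 then 0
  else if c = 1 then 0
  else wt2 x.1 x.2 (fun r => if r = 0 then 1 else 0)

/-- final weights -/
def efin (n : ℕ) (x : Edge S) (c : Fin 3) : ℤ := ebase p S code x c + eslope S x c * n

/-- register values along a word -/
def rv (n : ℕ) (w : ℕ → Edge S) (N : ℕ) (r : ℕ) : ℤ :=
  v0 n r + ∑ i ∈ Finset.range N, dl (w i).1 (w i).2 r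

theorem check2 (n : ℕ) (w : ℕ → Edge S) (N : ℕ) :
    efin p S code n (w N) 2 + ∑ i ∈ Finset.range N, ewt S code (w N) 2 (w i) =
      base2 (w N).1 (w N).2 + wt2 (w N).1 (w N).2 (rv S n w N) := by
  have h2 : ((2 : Fin 3) = 0) = False := by simp
  have h3 : ((2 : Fin 3) = 1) = False := by simp
  simp only [efin, ebase, eslope, ewt, h2, h3, if_false]
  have key : ∀ (κ : List Prog) (b : Bool),
      wt2 κ b (fun r => if r = 0 then 1 else 0) * n +
        ∑ i ∈ Finset.range N, wt2 κ b (dl (w i).1 (w i).2) = wt2 κ b (rv S n w N) := by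
    intro κ b
    match κ, b with
    | [], _ => simp [wt2]
    | nop :: k, _ => simp [wt2]
    | inc _ :: k, _ => simp [wt2]
    | seq p q :: k, _ => simp [wt2]
    | loop r p :: k, true =>
      simp only [wt2, rv, v0, Finset.sum_neg_distrib]
      split_ifs <;> simp <;> ring
    | loop r p :: k, false =>
      simp only [wt2, rv, v0]
      split_ifs <;> simp
  rw [← key]
  ring

theorem not_halt_of_good (hcode : Injective code) (n : ℕ) (w : ℕ → Edge S)
    (hw : Good (ewt S code) (efin p S code n) w) : ¬ Halt [p] (v0 n) := by
  have hpc : ∀ N, ((code (w N).1 : ℕ) : ℤ) = code [p] +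
      ∑ i ∈ Finset.range N, ((code (tgt (w i).1 (w i).2) : ℤ) - code (w i).1) := by
    intro N
    have h0 := hw N 0
    have h1 := hw N 1
    simp only [efin, ebase, eslope, ewt, if_true, one_ne_zero, if_false, zero_mul] at h0 h1
    have : ∑ i ∈ Finset.range N, ((code (w i).1 : ℤ) - code (tgt (w i).1 (w i).2)) =
      - ∑ i ∈ Finset.range N, ((code (tgt (w i).1 (w i).2) : ℤ) - code (w i).1) := by
      rw [← Finset.sum_neg_distrib]
      exact Finset.sum_congr rfl fun i _ => by ring
    rw [this] at h1
    omega
  have h0 : ((w 0).1 : List Prog) = [p] := by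
    apply hcode
    have := hpc 0
    simpa using this
  have hS : ∀ N, ((w (N + 1)).1 : List Prog) = tgt (w N).1 (w N).2 := by
    intro N
    apply hcode
    have h1 := hpc N
    have h2 := hpc (N + 1)
    rw [Finset.sum_range_succ] at h2
    omega
  have hV : ∀ N r, rv S n w (N + 1) r = rv S n w N r + dl (w N).1 (w N).2 r := by
    intro N r
    simp only [rv, Finset.sum_range_succ]
    ring
  have hg : ∀ N, base2 (w N).1 (w N).2 + wt2 (w N).1 (w N).2 (rv S n w N) < 0 := by
    intro N
    rw [← check2 p S code]
    exact hw N 2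
  have key : ∀ κ v, Halt κ v → ∀ N, ((w N).1 : List Prog) = κ →
      (∀ r, (v r : ℤ) = rv S n w N r) → False := by
    intro κ v h
    induction h with
    | nil v =>
      intro N hκ hv
      have := hg N
      rw [hκ] at this
      simp [base2, wt2] at this
    | nop _ ih =>
      intro N hκ hv
      refine ih (N + 1) (by rw [hS, hκ]; rfl) fun r => ?_
      rw [hV, hκ, hv]; simp [dl]
    | @inc r k v _ ih =>
      intro N hκ hv
      refine ih (N + 1) (by rw [hS, hκ]; rfl) fun x => ?_
      rw [hV, hκ, ← hv]
      by_cases hx : x = r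
      · subst hx; simp [dl]
      · simp [dl, hx]
    | seq _ ih =>
      intro N hκ hv
      refine ih (N + 1) (by rw [hS, hκ]; rfl) fun r => ?_
      rw [hV, hκ, hv]; simp [dl]
    | @loop0 r p k v h0 _ ih =>
      intro N hκ hv
      have hgN := hg N
      rw [hκ] at hgN
      cases hb : (w N).2 with
      | true =>
        rw [hb] at hgN
        simp [base2, wt2] at hgN
        rw [← hv] at hgN
        omega
      | false =>
        refine ih (N + 1) (by rw [hS, hκ, hb]; rfl) fun x => ?_
        rw [hV, hκ, hb, hv]; simp [dl]
    | @loopS r p k v h0 _ ih =>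
      intro N hκ hv
      have hgN := hg N
      rw [hκ] at hgN
      cases hb : (w N).2 with
      | true =>
        refine ih (N + 1) (by rw [hS, hκ, hb]; rfl) fun x => ?_
        rw [hV, hκ, hb, ← hv]
        by_cases hx : x = r
        · subst hx; simp [dl]; omega
        · simp [dl, hx]
      | false =>
        rw [hb] at hgN
        simp [base2, wt2] at hgN
        rw [← hv] at hgN
        omega
  intro h
  exact key _ _ h 0 h0 fun r => by simp [rv]

/-- branch taken -/
def br : List Prog → (ℕ → ℕ) → Bool
  | loop r _ :: _, v => decide (v r ≠ 0)
  | _, _ => true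

/-- new registers -/
def nv : List Prog → (ℕ → ℕ) → ℕ → ℕ
  | inc r :: _, v => update v r (v r + 1)
  | loop r _ :: _, v => update v r (v r - 1)
  | _, v => v

theorem not_halt_step {κ : List Prog} {v : ℕ → ℕ} (h : ¬ Halt κ v) :
    ¬ Halt (tgt κ (br κ v)) (nv κ v) ∧ (∀ x, (nv κ v x : ℤ) = v x + dl κ (br κ v) x) ∧
      base2 κ (br κ v) + wt2 κ (br κ v) (fun x => v x) < 0 := by
  match κ, h with
  | [], h => exact absurd (Halt.nil v) h
  | nop :: k, h => exact ⟨fun h' => h (Halt.nop h'), by simp [nv, dl], by simp [base2, wt2]⟩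
  | inc r :: k, h =>
    refine ⟨fun h' => h (Halt.inc h'), fun x => ?_, by simp [base2, wt2]⟩
    by_cases hx : x = r
    · subst hx; simp [nv, dl]
    · simp [nv, dl, hx]
  | seq p q :: k, h => exact ⟨fun h' => h (Halt.seq h'), by simp [nv, dl], by simp [base2, wt2]⟩
  | loop r p :: k, h =>
    by_cases h0 : v r = 0
    · have hb : br (loop r p :: k) v = false := by simp [br, h0]
      have hn : nv (loop r p :: k) v = v := by
        funext x
        simp only [nv, update_apply]
        split_ifs with hx
        · subst hx; omega
        · rfl
      rw [hb, hn]
      exact ⟨fun h' => h (Halt.loop0 h0 h'), by simp [dl], by simp [base2, wt2, h0]⟩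
    · have hb : br (loop r p :: k) v = true := by simp [br, h0]
      rw [hb]
      refine ⟨fun h' => h (Halt.loopS h0 h'), fun x => ?_, by simp [base2, wt2]; omega⟩
      by_cases hx : x = r
      · subst hx; simp [nv, dl]; omega
      · simp [nv, dl, hx]

theorem good_of_not_halt (hp : [p] ∈ S) (hS : ∀ κ ∈ S, ∀ b, tgt κ b ∈ S) (n : ℕ)
    (h : ¬ Halt [p] (v0 n)) : ∃ w, Good (ewt S code) (efin p S code n) w := by
  let st : ℕ → S × (ℕ → ℕ) := fun N => Nat.rec (⟨[p], hp⟩, v0 n)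
    (fun _ s => (⟨tgt s.1 (br s.1 s.2), hS _ s.1.2 _⟩, nv s.1 s.2)) N
  have hst : ∀ N, ((st (N + 1)).1 : List Prog) = tgt (st N).1 (br (st N).1 (st N).2) ∧
      (st (N + 1)).2 = nv (st N).1 (st N).2 := fun N => ⟨rfl, rfl⟩
  have hH : ∀ N, ¬ Halt (st N).1 (st N).2 := by
    intro N
    induction N with
    | zero => exact h
    | succ N ih =>
      rw [(hst N).1, (hst N).2]
      exact (not_halt_step ih).1
  let w : ℕ → Edge S := fun N => ((st N).1, br (st N).1 (st N).2)
  have hV : ∀ N x, ((st N).2 x : ℤ) = rv S n w N x := by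
    intro N x
    induction N with
    | zero => simp [rv, st]
    | succ N ih =>
      rw [(hst N).2, (not_halt_step (hH N)).2.1, ih]
      simp only [rv, Finset.sum_range_succ, w]
      ring
  have hpc : ∀ N, ((code (w N).1 : ℕ) : ℤ) = code [p] +
      ∑ i ∈ Finset.range N, ((code (tgt (w i).1 (w i).2) : ℤ) - code (w i).1) := by
    intro N
    induction N with
    | zero => simp [w, st]
    | succ N ih =>
      rw [Finset.sum_range_succ, ← add_assoc, ← ih]
      have : ((w (N + 1)).1 : List Prog) = tgt (w N).1 (w N).2 := (hst N).1
      rw [this]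
      ring
  refine ⟨w, fun N c => ?_⟩
  have hc : c = 0 ∨ c = 1 ∨ c = 2 := by
    fin_cases c <;> simp
  rcases hc with rfl | rfl | rfl
  · have := hpc N
    simp only [efin, ebase, eslope, ewt, if_true, zero_mul]
    omega
  · have := hpc N
    have e : ∑ i ∈ Finset.range N, ((code (w i).1 : ℤ) - code (tgt (w i).1 (w i).2)) =
      - ∑ i ∈ Finset.range N, ((code (tgt (w i).1 (w i).2) : ℤ) - code (w i).1) := by
      rw [← Finset.sum_neg_distrib]
      exact Finset.sum_congr rfl fun i _ => by ring
    simp only [efin, ebase, eslope, ewt, if_true, one_ne_zero, if_false, zero_mul]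
    rw [e]
    omega
  · rw [check2]
    have := (not_halt_step (hH N)).2.2
    rw [show (fun x => ((st N).2 x : ℤ)) = rv S n w N from funext (hV N)] at this
    exact this

end Enc

end BG

/-! ### The reduction -/

namespace BG

open Let

instance finite_Let (E : Type) [Finite E] : Finite (Let E) := by
  let f : Let E → Bool ⊕ (E ⊕ Option (E × Fin 3)) := fun x => match x with
    | s => Sum.inl true
    | z => Sum.inl false
    | e x => Sum.inr (Sum.inl x)
    | M q => Sum.inr (Sum.inr q)
  apply Finite.of_injective f
  intro x y h
  cases x <;> cases y <;> simp_all [f]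

theorem finite_moves {E : Type} [Finite E] (ι : Let E → ℕ) (wt : E → Fin 3 → E → ℤ)
    (fin : E → Fin 3 → ℤ) : {m | IsMove ι wt fin m}.Finite := by
  refine Set.Finite.subset
    (((((((Set.finite_singleton (([], 0) : Move)).union
    (Set.finite_range fun t : E × Fin 3 =>
      (([pp ι (e t.1), ps ι (M (some (t.1, t.2)))], 0) : Move))).union
    (Set.finite_range fun t : Let E × E =>
      (([pp ι t.1, pp ι (e t.2), ps ι (M none)], 0) : Move))).union
    (Set.finite_range fun t : Let E => (([pp ι t, pp ι s], 0) : Move))).union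
    (Set.finite_range fun t : Let E × Option (E × Fin 3) × E =>
      (([pp ι t.1, pp ι (M t.2.1), pp ι (e t.2.2), ps ι (M t.2.1)],
        wtq wt t.2.1 t.2.2) : Move))).union
    (Set.finite_range fun t : Let E × Option (E × Fin 3) =>
      (([pp ι t.1, pp ι (M t.2), pp ι s], finq fin t.2) : Move))).union
    ((Set.finite_range fun t : Let E => (([pp ι t], -1) : Move)).union
    (Set.finite_range fun t : Let E => (([pp ι t], 0) : Move)))) ?_
  intro m hm
  cases hm with
  | pass => exact Or.inl (Or.inl (Or.inl (Or.inl (Or.inl (Or.inl rfl)))))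
  | start x c => exact Or.inl (Or.inl (Or.inl (Or.inl (Or.inl (Or.inr ⟨(x, c), rfl⟩)))))
  | start1 y hy x => exact Or.inl (Or.inl (Or.inl (Or.inl (Or.inr ⟨(y, x), rfl⟩))))
  | start2 y hy => exact Or.inl (Or.inl (Or.inl (Or.inr ⟨y, rfl⟩)))
  | count y hy q x => exact Or.inl (Or.inl (Or.inr ⟨(y, q, x), rfl⟩))
  | final y hy q => exact Or.inl (Or.inr ⟨(y, q), rfl⟩)
  | sub y hy => exact Or.inr (Or.inl ⟨y, rfl⟩)
  | first y hy hs => exact Or.inr (Or.inr ⟨y, rfl⟩)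

/-- affine families of moves -/
abbrev AMove : Type := List SL × ℤ × ℤ

/-- the member of an affine family -/
def AMove.at (q : AMove) (n : ℕ) : Move := (q.1, q.2.1 + q.2.2 * n)

/-- the word of a member of an affine family -/
def aW (c : BraidWord5 × BraidWord5) (n : ℕ) : BraidWord5 :=
  c.1 ++ (List.range n).flatMap (fun _ => c.2)

theorem braid5_flat (n : ℕ) (u : BraidWord5) :
    braid5 ((List.range n).flatMap (fun _ => u)) = braid5 u ^ n := by
  induction n with
  | zero => simp [braid5]
  | succ n ih =>
    rw [List.range_succ, List.flatMap_append, braid5_append, ih, pow_succ]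
    simp

theorem braid5_aW (q : AMove) (n : ℕ) :
    braid5 (aW (yW q.1 ++ pW (-q.2.1), pW (-q.2.2)) n) = mB (q.at n) := by
  simp only [aW, braid5_append, braid5_flat, braid5_pW, mB, AMove.at]
  rw [mul_assoc, ← zpow_natCast, ← zpow_mul, ← zpow_add]
  congr 2
  ring

theorem reduction (p : Prog) : ∃ f : ℕ → BG5Instance, Computable f ∧
    ∀ n, (∃ v', Ev p (v0 n) v') ↔
      BG5AttackerWins ((f n).1.map braid5) ((f n).2.map braid5) 1 := by
  classical
  obtain ⟨S, hS, hp, hcl⟩ := exists_closed p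
  have : Finite S := hS
  obtain ⟨code, hcode⟩ := exists_injective_nat (List Prog)
  obtain ⟨ι, hι⟩ := exists_injective_nat (Let (Edge S))
  let Q : Set AMove :=
    {q | ∀ n, IsMove ι (ewt S code) (efin p S code n) (q.at n)}
  have hQ : Q.Finite := by
    have h0 := finite_moves ι (ewt S code) (efin p S code 0)
    have h1 := finite_moves ι (ewt S code) (efin p S code 1)
    refine Set.Finite.of_finite_image (f := fun q : AMove => (q.at 0, q.at 1))
      ((h0.prod h1).subset ?_) ?_
    · rintro _ ⟨q, hq, rfl⟩
      exact ⟨hq 0, hq 1⟩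
    · rintro ⟨a, b, c⟩ _ ⟨a', b', c'⟩ _ h
      simp only [AMove.at, Prod.mk.injEq] at h
      obtain ⟨⟨h1, h2⟩, -, h3⟩ := h
      simp only [Nat.cast_zero, mul_zero, add_zero, Nat.cast_one, mul_one] at h2 h3
      subst h1 h2
      simpa using h3
  have hQ' : ∀ n m, IsMove ι (ewt S code) (efin p S code n) m ↔ ∃ q ∈ Q, m = q.at n := by
    intro n m
    constructor
    · intro hm
      cases hm with
      | pass => exact ⟨([], 0, 0), fun n => by simpa [AMove.at] using IsMove.pass, by simp [AMove.at]⟩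
      | start x c =>
        exact ⟨(_, 0, 0), fun n => by simpa [AMove.at] using IsMove.start x c, by simp [AMove.at]⟩
      | start1 y hy x =>
        exact ⟨(_, 0, 0), fun n => by simpa [AMove.at] using IsMove.start1 y hy x, by simp [AMove.at]⟩
      | start2 y hy =>
        exact ⟨(_, 0, 0), fun n => by simpa [AMove.at] using IsMove.start2 y hy, by simp [AMove.at]⟩
      | count y hy q x =>
        exact ⟨(_, wtq (ewt S code) q x, 0),
          fun n => by simpa [AMove.at] using IsMove.count y hy q x, by simp [AMove.at]⟩
      | final y hy q =>
        cases q with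
        | none =>
          refine ⟨([pp ι y, pp ι (M none), pp ι s], 0, 0), fun n => ?_, by simp [AMove.at, finq]⟩
          have h : IsMove ι (ewt S code) (efin p S code n) _ := IsMove.final y hy none
          simpa [AMove.at, finq] using h
        | some t =>
          exact ⟨([pp ι y, pp ι (M (some t)), pp ι s], ebase p S code t.1 t.2, eslope S t.1 t.2),
            fun n => IsMove.final y hy (some t), rfl⟩
      | sub y hy =>
        exact ⟨(_, -1, 0), fun n => by simpa [AMove.at] using IsMove.sub y hy, by simp [AMove.at]⟩
      | first y hy hs =>
        exact ⟨(_, 0, 0), fun n => by simpa [AMove.at] using IsMove.first y hy hs, by simp [AMove.at]⟩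
    · rintro ⟨q, hq, rfl⟩
      exact hq n
  have hDf : {x : Let (Edge S) | Df x}.Finite := Set.toFinite _
  let L : List (BraidWord5 × BraidWord5) := hQ.toFinset.toList.map
    fun q => (yW q.1 ++ pW (-q.2.1), pW (-q.2.2))
  let D : List BraidWord5 := hDf.toFinset.toList.map fun x => yW [ps ι x]
  refine ⟨fun n => (L.map fun c => aW c n, D), ?_, fun n => ?_⟩
  · refine Primrec.to_comp (Primrec.pair (Primrec.list_map (Primrec.const L) ?_)
      (Primrec.const D))
    refine Primrec.list_append.comp (Primrec.fst.comp Primrec.snd) ?_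
    exact Primrec.list_flatMap (Primrec.list_range.comp Primrec.fst)
      (Primrec.snd.comp (Primrec.snd.comp Primrec.fst))
  · have hA : ∀ x, x ∈ (L.map fun c => aW c n).map braid5 ↔
        ∃ m, IsMove ι (ewt S code) (efin p S code n) m ∧ x = mB m := by
      intro x
      simp only [L, List.map_map, List.mem_map, Finset.mem_toList, Set.Finite.mem_toFinset,
        Function.comp_apply, braid5_aW]
      constructor
      · rintro ⟨q, hq, rfl⟩
        exact ⟨_, hq n, rfl⟩
      · rintro ⟨m, hm, rfl⟩
        obtain ⟨q, hq, rfl⟩ := (hQ' n m).1 hm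
        exact ⟨q, hq, rfl⟩
    have hD : ∀ x, x ∈ D.map braid5 ↔ ∃ y : Let (Edge S), Df y ∧ x = mB ([ps ι y], 0) := by
      intro x
      simp only [D, List.map_map, List.mem_map, Finset.mem_toList, Set.Finite.mem_toFinset,
        Function.comp_apply, Set.mem_ofPred_eq, mB, neg_zero, zpow_zero, mul_one]
      constructor
      · rintro ⟨y, hy, rfl⟩
        exact ⟨y, hy, rfl⟩
      · rintro ⟨y, hy, rfl⟩
        exact ⟨y, hy, rfl⟩
    rw [← halt_iff]
    constructor
    · intro hh
      refine attacker_wins ι _ _ hA hD ?_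
      rintro ⟨w, hw⟩
      exact not_halt_of_good p S code hcode n w hw hh
    · intro hh
      by_contra hn
      obtain ⟨w, hw⟩ := good_of_not_halt p S code hp hcl n hn
      exact defender_wins ι _ _ hι hA hD w hw hh

end BG

/-- It is undecidable whether Attacker has a winning strategy in the Braid Game on `B₅`
starting from the trivial braid. -/
theorem braid_game_B5_undecidable :
    ¬ ComputablePred (fun inst : BG5Instance =>
      BG5AttackerWins (inst.1.map braid5) (inst.2.map braid5) (1 : B5)) := by
  intro hc
  obtain ⟨p, hp⟩ := BG.exists_universal
  obtain ⟨f, hf, h⟩ := BG.reduction p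
  exact hp (ComputablePred.computable_of_manyOneReducible ⟨f, hf, h⟩ hc)
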